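/- Let H(x) = tanh(x/√2), Y₁(x) = 2^(-3/4)·√3·tanh(x/√2)·sech(x/√2), f(x) = (3/2)·( H(x)·Y₁(x)² - (∫_ℝ H(y)·Y₁(y)³ dy)·Y₁(x) ), ψ(x) = 8√2·tanh(x/(8√2)), ζ(x) = sech(x/(8√2)), Z₁(x) = Y₁(x)·cosh(x/(8√2)), V(x) = (1/256)·sech²(x/(8√2)) + 24·tanh(x/(8√2))·cosh²(x/(8√2))·tanh(x/√2)·sech²(x/√2), and k(x) = e^(2ix)·( 1 + (1/2)·sech²(x/√2) + i·√2·tanh(x/√2) ). Assume ∫_ℝ ψ'(x)·f(x)·Im(k(x)) dx ≠ 0 and set a = -( ∫_ℝ (ψ(x)·f'(x) + (1/2)·ψ'(x)·f(x))·Im(k(x)) dx ) / ( ∫_ℝ ψ'(x)·f(x)·Im(k(x)) dx ). Let g : ℝ → ℝ be an odd Schwartz function satisfying -g''(x) - 4·g(x) - 3·sech²(x/√2)·g(x) = ψ(x)·f'(x) + (a + 1/2)·ψ'(x)·f(x) for all x. Then there exists κ > 0 such that for every real number α and every odd differentiable function w : ℝ → ℝ with w and w' square integrable and ∫_ℝ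 w(x)·Z₁(x) dx = 0, one has ∫_ℝ ( w'(x)² - V(x)·w(x)² ) dx + a·α·∫_ℝ w(x)·ζ(x)·f(x) dx + α²·∫_ℝ f(x)·g(x) dx ≥ κ·( α² + ∫_ℝ w'(x)² dx ). -/

import Mathlib

open MeasureTheory

noncomputable def sech (x : ℝ) : ℝ := 1 / Real.cosh x

noncomputable def Hkink (x : ℝ) : ℝ := Real.tanh (x / Real.sqrt 2)

noncomputable def Y1 (x : ℝ) : ℝ :=
  (2 : ℝ) ^ (-(3 : ℝ) / 4) * Real.sqrt 3 * Real.tanh (x / Real.sqrt 2) * sech (x / Real.sqrt 2)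

noncomputable def fsrc (x : ℝ) : ℝ :=
  (3 / 2) * (Hkink x * (Y1 x) ^ 2 - (∫ y : ℝ, Hkink y * (Y1 y) ^ 3) * Y1 x)

noncomputable def psiV (x : ℝ) : ℝ := 8 * Real.sqrt 2 * Real.tanh (x / (8 * Real.sqrt 2))

noncomputable def zetaV (x : ℝ) : ℝ := sech (x / (8 * Real.sqrt 2))

noncomputable def Z1 (x : ℝ) : ℝ := Y1 x * Real.cosh (x / (8 * Real.sqrt 2))

noncomputable def Vpot (x : ℝ) : ℝ :=
  (1 / 256) * sech (x / (8 * Real.sqrt 2)) ^ 2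
    + 24 * Real.tanh (x / (8 * Real.sqrt 2)) * Real.cosh (x / (8 * Real.sqrt 2)) ^ 2
      * Real.tanh (x / Real.sqrt 2) * sech (x / Real.sqrt 2) ^ 2

noncomputable def kJost (x : ℝ) : ℂ :=
  Complex.exp (2 * Complex.I * (x : ℂ)) *
    (1 + ((1 / 2 * sech (x / Real.sqrt 2) ^ 2 : ℝ) : ℂ)
      + Complex.I * (Real.sqrt 2 : ℂ) * ((Real.tanh (x / Real.sqrt 2) : ℝ) : ℂ))

/-- monomials `c t^i H^j S^k` -/
abbrev MP := List (Int × ℕ × ℕ × ℕ)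

namespace MP

def scal (a : Int) : MP → MP
  | [] => []
  | (c, m) :: p => (a * c, m) :: scal a p

def mulMono (a : Int) (i j k : ℕ) : MP → MP
  | [] => []
  | (c, i', j', k') :: p => (a * c, i + i', j + j', k + k') :: mulMono a i j k p

def ins (c : Int) (i j k : ℕ) : MP → MP
  | [] => [(c, i, j, k)]
  | (c', i', j', k') :: p =>
    bif (Nat.beq i i' && Nat.beq j j') && Nat.beq k k' then (c + c', i, j, k) :: p
    else (c', i', j', k') :: ins c i j k p

def hred (c : Int) (i : ℕ) : ℕ → ℕ → MP → MP
  | 0, k, acc => ins c i 0 k acc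
  | 1, k, acc => ins c i 1 k acc
  | (j + 2), k, acc => hred c i j k (hred (-c) i j (k + 2) acc)

def isZ : Int → Bool
  | Int.ofNat n => Nat.beq n 0
  | Int.negSucc _ => false

def norm : MP → MP
  | [] => []
  | (c, i, j, k) :: p => bif isZ c then norm p else hred c i j k (norm p)

def mul : MP → MP → MP
  | [], _ => []
  | (c, i, j, k) :: p, q => mulMono c i j k q ++ mul p q

def d8raw : MP → MP
  | [] => []
  | (c, i, j, k) :: p =>
    (c * i, i - 1, j, k) :: (-c * i, i + 1, j, k) :: (8 * c * j, i, j - 1, k + 2) ::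
      (-8 * c * k, i, j + 1, k) :: d8raw p

def d8 (p : MP) : MP := norm (d8raw p)

end MP

namespace PL

def add : List Int → List Int → List Int
  | [], q => q
  | c :: p, [] => c :: p
  | c :: p, d :: q => (c + d) :: add p q

def scal (a : Int) : List Int → List Int
  | [] => []
  | c :: p => (a * c) :: scal a p

def mul : List Int → List Int → List Int
  | [], _ => []
  | c :: p, q => add (scal c q) (0 :: mul p q)

def shift (a : Int) : List Int → List Int
  | [] => []
  | c :: p => add (scal a (shift a p)) (c :: shift a p)

def leftAux (a : Int) : List Int → List Int × List Int
  | [] => ([], [1])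
  | c :: p =>
    match leftAux a p with
    | (q, w) => (add (scal c (add w (0 :: w))) (scal a q), add w (0 :: w))

def left (a : Int) (p : List Int) : List Int := (leftAux a p).1

def bsc (b : Int) : List Int → List Int
  | [] => []
  | c :: p => (c * b ^ (p.length + 1)) :: bsc b p

def allNonneg : List Int → Bool
  | [] => true
  | (Int.ofNat _) :: p => allNonneg p
  | (Int.negSucc _) :: _ => false

inductive Tr
  | L
  | N (a b : ℕ) (l r : Tr)

def chk : Tr → List Int → Bool
  | .L, p => allNonneg p
  | .N a b l r, p =>
    (Nat.ble 1 a && Nat.ble 1 b) &&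
      (chk l (left a (bsc b p)) && chk r (shift a (bsc b p)))

/-- `(1+s)^n` -/
def op : ℕ → List Int
  | 0 => [1]
  | n + 1 => add (op n) (0 :: op n)

def xp : ℕ → List Int → List Int
  | 0, p => p
  | n + 1, p => 0 :: xp n p

def Cy : List Int := [1, 32, 160, 256, 128]
def Ny : List Int := [8, 80, 192, 128]

/-- part of `p` with `j+k = m` -/
def Q (par A m : ℕ) : MP → List Int
  | [] => []
  | (c, i, j, k) :: p =>
    bif Nat.beq (j + k) m then
      add (xp ((i + j - par) / 2)
        (scal c (bif Nat.beq j 0 then op ((i + j - par) / 2 + (A - i))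
          else mul Ny (op ((i + j - par) / 2 + (A - i)))))) (Q par A m p)
    else Q par A m p

def conv (par A : ℕ) (p : MP) : ℕ → List Int
  | 0 => Q par A 0 p
  | m + 1 => add (mul Cy (conv par A p m)) (Q par A (m + 1) p)

def ok (par A K : ℕ) : MP → Bool
  | [] => true
  | (_, i, j, k) :: p =>
    (Nat.ble i A && Nat.ble j 1) && (Nat.ble (j + k) K && Nat.beq ((i + j) % 2) par) &&
      ok par A K p

end PL
namespace MP

noncomputable def ev (t H S : ℝ) : MP → ℝ
  | [] => 0
  | (c, i, j, k) :: p => (c : ℝ) * t ^ i * H ^ j * S ^ k + ev t H S p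

variable (t H S : ℝ)

theorem ev_scal (a : Int) (p : MP) : ev t H S (scal a p) = a * ev t H S p := by
  induction p with
  | nil => simp [scal, ev]
  | cons m p ih => obtain ⟨c, i, j, k⟩ := m; simp only [scal, ev, ih]; push_cast; ring

theorem ev_append (p q : MP) : ev t H S (p ++ q) = ev t H S p + ev t H S q := by
  induction p with
  | nil => simp [ev]
  | cons m p ih => obtain ⟨c, i, j, k⟩ := m; simp only [List.cons_append, ev, ih]; ring

theorem ev_mulMono (a : Int) (i j k : ℕ) (p : MP) :
    ev t H S (mulMono a i j k p) = a * t ^ i * H ^ j * S ^ k * ev t H S p := by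
  induction p with
  | nil => simp [mulMono, ev]
  | cons m p ih => obtain ⟨c, i', j', k'⟩ := m; simp only [mulMono, ev, ih]; push_cast; ring

theorem ev_mul (p q : MP) : ev t H S (mul p q) = ev t H S p * ev t H S q := by
  induction p with
  | nil => simp [mul, ev]
  | cons m p ih =>
    obtain ⟨c, i', j', k'⟩ := m; simp only [mul, ev, ev_append, ev_mulMono, ih]; ring

theorem ev_ins (c : Int) (i j k : ℕ) (p : MP) :
    ev t H S (ins c i j k p) = c * t ^ i * H ^ j * S ^ k + ev t H S p := by
  induction p with
  | nil => simp [ins, ev]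
  | cons m p ih =>
    obtain ⟨c', i', j', k'⟩ := m
    simp only [ins]
    cases h : (Nat.beq i i' && Nat.beq j j') && Nat.beq k k' with
    | false => simp only [cond_false, ev, ih]; ring
    | true =>
      simp only [Bool.and_eq_true] at h
      obtain ⟨⟨h1, h2⟩, h3⟩ := h
      obtain rfl := Nat.eq_of_beq_eq_true h1
      obtain rfl := Nat.eq_of_beq_eq_true h2
      obtain rfl := Nat.eq_of_beq_eq_true h3
      simp only [cond_true, ev]; push_cast; ring

theorem ev_hred (h : H ^ 2 = 1 - S ^ 2) (c : Int) (i j k : ℕ) (p : MP) :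
    ev t H S (hred c i j k p) = c * t ^ i * H ^ j * S ^ k + ev t H S p := by
  induction j using Nat.twoStepInduction generalizing c k p with
  | zero => simp [hred, ev_ins]
  | one => simp [hred, ev_ins]
  | more j ih _ =>
    simp only [hred, ih]
    rw [pow_add H j 2, h]; push_cast; ring

theorem ev_norm (h : H ^ 2 = 1 - S ^ 2) (p : MP) : ev t H S (norm p) = ev t H S p := by
  induction p with
  | nil => simp [norm, ev]
  | cons m p ih =>
    obtain ⟨c, i', j', k'⟩ := m
    simp only [norm, ev]
    cases hz : isZ c with
    | false => simp only [cond_false, ev_hred t H S h, ih]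
    | true =>
      have : c = 0 := by
        cases c with
        | negSucc n => simp [isZ] at hz
        | ofNat n => rw [Nat.eq_of_beq_eq_true (n := n) (m := 0) hz]; rfl
      subst this
      simp [ih]

end MP

namespace PL

noncomputable def pev (s : ℝ) : List Int → ℝ
  | [] => 0
  | c :: p => (c : ℝ) + s * pev s p

theorem pev_add (s : ℝ) (p q : List Int) : pev s (add p q) = pev s p + pev s q := by
  induction p generalizing q with
  | nil => simp [add, pev]
  | cons c p ih =>
    cases q with
    | nil => simp [add, pev]
    | cons d q => simp only [add, pev, ih]; push_cast; ring

theorem pev_scal (s : ℝ) (a : Int) (p : List Int) : pev s (scal a p) = a * pev s p := by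
  induction p with
  | nil => simp [scal, pev]
  | cons c p ih => simp only [scal, pev, ih]; push_cast; ring

theorem pev_mul (s : ℝ) (p q : List Int) : pev s (mul p q) = pev s p * pev s q := by
  induction p with
  | nil => simp [mul, pev]
  | cons c p ih => simp only [mul, pev, pev_add, pev_scal, ih]; push_cast; ring

theorem pev_shift (x : ℝ) (a : Int) (p : List Int) : pev x (shift a p) = pev (x + a) p := by
  induction p with
  | nil => simp [shift, pev]
  | cons c p ih => simp only [shift, pev, pev_add, pev_scal, ih]; ring

theorem pev_leftAux (x s : ℝ) (a : Int) (hs : (1 + x) * s = a) (p : List Int) :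
    pev x (leftAux a p).1 = (1 + x) ^ p.length * pev s p ∧
      pev x (leftAux a p).2 = (1 + x) ^ p.length := by
  induction p with
  | nil => simp [leftAux, pev]
  | cons c p ih =>
    obtain ⟨h1, h2⟩ := ih
    simp only [leftAux, pev, pev_add, pev_scal, h1, h2, List.length_cons, ← hs]
    constructor
    · push_cast; ring
    · push_cast; ring

theorem pev_bsc (x b : ℝ) (b' : Int) (hb : (b' : ℝ) = b) (p : List Int) :
    pev (b * x) (bsc b' p) = b ^ p.length * pev x p := by
  induction p with
  | nil => simp [bsc, pev]
  | cons c p ih =>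
    simp only [bsc, pev, ih, List.length_cons]; push_cast; rw [hb]; ring

theorem pev_nonneg {p : List Int} (h : allNonneg p = true) {s : ℝ} (hs : 0 ≤ s) :
    0 ≤ pev s p := by
  induction p with
  | nil => simp [pev]
  | cons c p ih =>
    cases c with
    | negSucc n => simp [allNonneg] at h
    | ofNat n =>
      simp only [allNonneg] at h
      have := ih h
      have hn : (0 : ℝ) ≤ ((Int.ofNat n : Int) : ℝ) := by
        have : (0 : Int) ≤ Int.ofNat n := Int.natCast_nonneg n
        exact_mod_cast this
      simp only [pev]; positivity

theorem left_sound {p : List Int} {a : ℕ} (ha : 1 ≤ a)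
    (h : ∀ x : ℝ, 0 ≤ x → 0 ≤ pev x (left a p)) {s : ℝ} (hs : 0 < s) (hs' : s ≤ a) :
    0 ≤ pev s p := by
  have ha' : (0 : ℝ) < a := by exact_mod_cast ha
  have hx : 0 ≤ a / s - 1 := by
    rw [sub_nonneg, le_div_iff₀ hs]; linarith
  have h1 := h _ hx
  rw [left, (pev_leftAux (a / s - 1) s a (by push_cast; field_simp; ring) p).1] at h1
  have h2 : (0 : ℝ) < (1 + (a / s - 1)) ^ p.length := by
    have : (0 : ℝ) < 1 + (a / s - 1) := by linarith
    positivity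
  exact nonneg_of_mul_nonneg_right h1 h2

theorem right_sound {p : List Int} {a : ℕ}
    (h : ∀ x : ℝ, 0 ≤ x → 0 ≤ pev x (shift a p)) {s : ℝ} (hs' : a ≤ s) :
    0 ≤ pev s p := by
  have h1 := h (s - a) (by linarith)
  rw [pev_shift] at h1
  simpa using h1

theorem bsc_sound {p : List Int} {b : ℕ} (hb : 1 ≤ b) {s : ℝ}
    (h : 0 ≤ pev (b * s) (bsc b p)) : 0 ≤ pev s p := by
  have hb' : (0 : ℝ) < b := by exact_mod_cast hb
  rw [pev_bsc s b b (by push_cast; rfl)] at h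
  exact nonneg_of_mul_nonneg_right h (by positivity)

theorem pev_cont (p : List Int) : Continuous fun s => pev s p := by
  induction p with
  | nil => simp only [pev]; fun_prop
  | cons c p ih => simp only [pev]; fun_prop

theorem pev_ext {p : List Int} (h : ∀ s : ℝ, 0 < s → 0 ≤ pev s p) (s : ℝ) (hs : 0 ≤ s) :
    0 ≤ pev s p := by
  have h1 : Set.Ioi (0 : ℝ) ⊆ {s | 0 ≤ pev s p} := fun x hx => h x hx
  have h2 : IsClosed {s | 0 ≤ pev s p} := isClosed_le continuous_const (pev_cont p)
  have h3 := closure_minimal h1 h2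
  rw [closure_Ioi] at h3
  exact h3 hs

theorem chk_sound (tr : Tr) : ∀ (p : List Int), chk tr p = true → ∀ s : ℝ, 0 < s → 0 ≤ pev s p := by
  induction tr with
  | L => intro p h s hs; exact pev_nonneg h hs.le
  | N a b l r ihl ihr =>
    intro p h s hs
    simp only [chk, Bool.and_eq_true] at h
    obtain ⟨⟨ha, hb⟩, hl, hr⟩ := h
    have ha := Nat.le_of_ble_eq_true ha
    have hb := Nat.le_of_ble_eq_true hb
    have hb' : (0 : ℝ) < b := by exact_mod_cast hb
    apply bsc_sound hb
    have hx : 0 < (b : ℝ) * s := by positivity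
    rcases le_total ((b : ℝ) * s) a with h1 | h1
    · refine left_sound ha ?_ hx h1
      exact pev_ext (ihl _ hl)
    · refine right_sound ?_ h1
      exact pev_ext (ihr _ hr)

theorem pev_op (s : ℝ) (n : ℕ) : pev s (op n) = (1 + s) ^ n := by
  induction n with
  | zero => simp [op, pev]
  | succ n ih => simp only [op, pev, pev_add, ih]; push_cast; ring

theorem pev_xp (s : ℝ) (n : ℕ) (p : List Int) : pev s (xp n p) = s ^ n * pev s p := by
  induction n with
  | zero => simp [xp]
  | succ n ih => simp only [xp, pev, ih]; push_cast; ring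

/-- the part of `ev` with `j+k = m` -/
noncomputable def evQ (t H S : ℝ) (m : ℕ) : MP → ℝ
  | [] => 0
  | (c, i, j, k) :: p => (if j + k = m then (c : ℝ) * t ^ i * H ^ j * S ^ k else 0) + evQ t H S m p

noncomputable def evF (t H S : ℝ) (m : ℕ) : MP → ℝ
  | [] => 0
  | (c, i, j, k) :: p => (if j + k ≤ m then (c : ℝ) * t ^ i * H ^ j * S ^ k else 0) + evF t H S m p

theorem evF_succ (t H S : ℝ) (m : ℕ) (p : MP) :
    evF t H S (m + 1) p = evF t H S m p + evQ t H S (m + 1) p := by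
  induction p with
  | nil => simp [evF, evQ]
  | cons q p ih =>
    obtain ⟨c, i, j, k⟩ := q
    simp only [evF, evQ, ih]
    rcases lt_trichotomy (j + k) (m + 1) with h | h | h
    · rw [if_pos (by omega), if_pos (by omega), if_neg (by omega)]; ring
    · rw [if_pos (by omega), if_neg (by omega), if_pos (by omega)]; ring
    · rw [if_neg (by omega), if_neg (by omega), if_neg (by omega)]; ring

theorem evF_zero (t H S : ℝ) (p : MP) : evF t H S 0 p = evQ t H S 0 p := by
  induction p with
  | nil => simp [evF, evQ]
  | cons q p ih => obtain ⟨c, i, j, k⟩ := q; simp only [evF, evQ, ih, Nat.le_zero]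

theorem evF_ok (t H S : ℝ) (par A K : ℕ) (p : MP) (h : ok par A K p = true) :
    evF t H S K p = MP.ev t H S p := by
  induction p with
  | nil => simp [evF, MP.ev]
  | cons q p ih =>
    obtain ⟨c, i, j, k⟩ := q
    simp only [ok, Bool.and_eq_true] at h
    simp only [evF, MP.ev, ih h.2]
    rw [if_pos (Nat.le_of_ble_eq_true h.1.2.1)]

structure Rel (s σ t H S : ℝ) : Prop where
  hs : 0 < s
  hσ : 0 < σ
  hσ2 : σ ^ 2 = s * (1 + s)
  ht : t * (1 + s) = σ
  hH : H * pev s Cy = σ * pev s Ny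
  hS : S * pev s Cy = 1

theorem Q_sound {s σ t H S : ℝ} (R : Rel s σ t H S) (par A K m : ℕ) (p : MP)
    (h : ok par A K p = true) :
    σ ^ par * pev s (Q par A m p) = (1 + s) ^ A * pev s Cy ^ m * evQ t H S m p := by
  induction p with
  | nil => simp [evQ, Q, pev]
  | cons q p ih =>
    obtain ⟨c, i, j, k⟩ := q
    simp only [ok, Bool.and_eq_true] at h
    obtain ⟨⟨⟨h1, h2⟩, h3, h4⟩, h5⟩ := h
    have h1 := Nat.le_of_ble_eq_true h1
    have h2 := Nat.le_of_ble_eq_true h2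
    have h4 := Nat.eq_of_beq_eq_true h4
    have ih := ih h5
    simp only [Q, evQ]
    by_cases hm : j + k = m
    · rw [hm, Nat.beq_refl, cond_true, if_pos rfl, pev_add, pev_xp, pev_scal]
      set e := (i + j - par) / 2 with he
      have hij : i + j = 2 * e + par := by omega
      have key : pev s (bif Nat.beq j 0 then op (e + (A - i)) else mul Ny (op (e + (A - i))))
          = pev s Ny ^ j * (1 + s) ^ (e + (A - i)) := by
        interval_cases j
        · simp [pev_op]
        · show pev s (mul Ny (op (e + (A - i)))) = _
          rw [pev_mul, pev_op, pow_one]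
      rw [key, mul_add, mul_add, ih]
      congr 1
      have hA : (1 + s) ^ A = (1 + s) ^ (A - i) * (1 + s) ^ i := by
        rw [← pow_add]; congr 1; omega
      have e1 : t ^ i * (1 + s) ^ i = σ ^ i := by rw [← mul_pow, R.ht]
      have e2 : H ^ j * pev s Cy ^ j = σ ^ j * pev s Ny ^ j := by
        rw [← mul_pow, R.hH, mul_pow]
      have e3 : S ^ k * pev s Cy ^ k = 1 := by rw [← mul_pow, R.hS, one_pow]
      have e4 : σ ^ i * σ ^ j = (s * (1 + s)) ^ e * σ ^ par := by
        rw [← pow_add, hij, pow_add, pow_mul, R.hσ2]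
      calc σ ^ par * (s ^ e * (c * (pev s Ny ^ j * (1 + s) ^ (e + (A - i)))))
          = c * ((s * (1 + s)) ^ e * σ ^ par) * pev s Ny ^ j * (1 + s) ^ (A - i) := by
            rw [pow_add, mul_pow]; ring
        _ = c * (t ^ i * (1 + s) ^ i) * (H ^ j * pev s Cy ^ j) * (S ^ k * pev s Cy ^ k)
              * (1 + s) ^ (A - i) := by rw [← e4, e1, e2, e3]; ring
        _ = _ := by rw [hA, ← hm, pow_add]; ring
    · have hb : Nat.beq (j + k) m = false := by
        cases hb : Nat.beq (j + k) m with
        | false => rfl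
        | true => exact absurd (Nat.eq_of_beq_eq_true hb) hm
      rw [hb, cond_false, if_neg hm, zero_add, ih]

theorem conv_sound {s σ t H S : ℝ} (R : Rel s σ t H S) (par A K m : ℕ) (p : MP)
    (h : ok par A K p = true) :
    σ ^ par * pev s (conv par A p m) = (1 + s) ^ A * pev s Cy ^ m * evF t H S m p := by
  induction m with
  | zero => rw [conv, Q_sound R par A K 0 p h, evF_zero]
  | succ m ih =>
    rw [conv, pev_add, pev_mul, mul_add, Q_sound R par A K (m + 1) p h, evF_succ]
    rw [show σ ^ par * (pev s Cy * pev s (conv par A p m))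
      = pev s Cy * (σ ^ par * pev s (conv par A p m)) by ring, ih]
    ring

theorem ev_nonneg_of_pev {s σ t H S : ℝ} (R : Rel s σ t H S) (par A K : ℕ) (p : MP)
    (h : ok par A K p = true) (hp : 0 ≤ pev s (conv par A p K)) : 0 ≤ MP.ev t H S p := by
  have h1 := conv_sound R par A K K p h
  rw [evF_ok t H S par A K p h] at h1
  have hC : 0 < pev s Cy := by
    have := R.hs
    simp only [Cy, pev]; push_cast; positivity
  have h2 : 0 ≤ (1 + s) ^ A * pev s Cy ^ K * MP.ev t H S p := by
    rw [← h1]; exact mul_nonneg (pow_nonneg R.hσ.le _) hp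
  have h3 : 0 < (1 + s) ^ A * pev s Cy ^ K := by
    have := R.hs
    positivity
  exact nonneg_of_mul_nonneg_right h2 h3

def cert (par A K : ℕ) (tr : Tr) (p : MP) : Bool := ok par A K p && chk tr (conv par A p K)
def certL (par A K : ℕ) (tr : Tr) (p : MP) : Bool :=
  ok par A K p && chk tr (left 1 (bsc 20 (conv par A p K)))
def certR (par A K : ℕ) (tr : Tr) (p : MP) : Bool :=
  ok par A K p && chk tr (shift 1 (bsc 20 (conv par A p K)))

theorem cert_sound {s σ t H S : ℝ} (R : Rel s σ t H S) {par A K : ℕ} {tr : Tr} {p : MP}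
    (h : cert par A K tr p = true) : 0 ≤ MP.ev t H S p := by
  simp only [cert, Bool.and_eq_true] at h
  exact ev_nonneg_of_pev R par A K p h.1 (chk_sound tr _ h.2 s R.hs)

theorem certL_sound {s σ t H S : ℝ} (R : Rel s σ t H S) {par A K : ℕ} {tr : Tr} {p : MP}
    (h : certL par A K tr p = true) (hs : 20 * s ≤ 1) : 0 ≤ MP.ev t H S p := by
  simp only [certL, Bool.and_eq_true] at h
  refine ev_nonneg_of_pev R par A K p h.1 (bsc_sound (b := 20) (by norm_num) ?_)
  have := R.hs
  refine left_sound (a := 1) le_rfl ?_ (by positivity) (by push_cast; linarith)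
  exact pev_ext (chk_sound tr _ h.2)

theorem certR_sound {s σ t H S : ℝ} (R : Rel s σ t H S) {par A K : ℕ} {tr : Tr} {p : MP}
    (h : certR par A K tr p = true) (hs : 1 ≤ 20 * s) : 0 ≤ MP.ev t H S p := by
  simp only [certR, Bool.and_eq_true] at h
  refine ev_nonneg_of_pev R par A K p h.1 (bsc_sound (b := 20) (by norm_num) ?_)
  refine right_sound (a := 1) ?_ (by push_cast; linarith)
  exact pev_ext (chk_sound tr _ h.2)

end PL
open MeasureTheory Filter Topology

noncomputable def tt (x : ℝ) : ℝ := Real.tanh (x / (8 * Real.sqrt 2))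
noncomputable def HH (x : ℝ) : ℝ := Real.tanh (x / Real.sqrt 2)
noncomputable def SS (x : ℝ) : ℝ := sech (x / Real.sqrt 2)
noncomputable def EE (p : MP) (x : ℝ) : ℝ := MP.ev (tt x) (HH x) (SS x) p
noncomputable def ss (x : ℝ) : ℝ := Real.sinh (x / (8 * Real.sqrt 2)) ^ 2

theorem s2pos : 0 < Real.sqrt 2 := by positivity
theorem s2sq : Real.sqrt 2 ^ 2 = 2 := Real.sq_sqrt (by norm_num)

theorem tanh_hasDerivAt (u : ℝ) : HasDerivAt Real.tanh (1 - Real.tanh u ^ 2) u := by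
  have h := (Real.hasDerivAt_sinh u).div (Real.hasDerivAt_cosh u) (Real.cosh_pos u).ne'
  have e : (Real.sinh / Real.cosh) = Real.tanh := by
    funext v; simp [Real.tanh_eq_sinh_div_cosh]
  rw [e] at h
  refine h.congr_deriv ?_
  rw [Real.tanh_eq_sinh_div_cosh]
  have := (Real.cosh_pos u).ne'
  field_simp

theorem sech_hasDerivAt (u : ℝ) : HasDerivAt sech (-(Real.tanh u * sech u)) u := by
  have h := (Real.hasDerivAt_cosh u).inv (Real.cosh_pos u).ne'
  have e : (Real.cosh)⁻¹ = sech := by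
    funext v; simp [sech]
  rw [e] at h
  refine h.congr_deriv ?_
  rw [Real.tanh_eq_sinh_div_cosh, sech]
  have := (Real.cosh_pos u).ne'
  field_simp

theorem HS_sq (x : ℝ) : HH x ^ 2 = 1 - SS x ^ 2 := by
  have h := Real.cosh_sq (x / Real.sqrt 2)
  have hc := (Real.cosh_pos (x / Real.sqrt 2)).ne'
  rw [HH, SS, Real.tanh_eq_sinh_div_cosh, sech]
  field_simp
  linarith

theorem SS_pos (x : ℝ) : 0 < SS x := by
  have := Real.cosh_pos (x / Real.sqrt 2)
  rw [SS, sech]; positivity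

theorem SS_le_one (x : ℝ) : SS x ≤ 1 := by
  have := Real.one_le_cosh (x / Real.sqrt 2)
  rw [SS, sech]; exact div_le_one_of_le₀ this (by positivity)

theorem tt_lt (x : ℝ) : tt x ^ 2 < 1 := by
  have h := Real.cosh_sq (x / (8 * Real.sqrt 2))
  have hc := (Real.cosh_pos (x / (8 * Real.sqrt 2)))
  rw [tt, Real.tanh_eq_sinh_div_cosh, div_pow, div_lt_one (by positivity)]
  linarith

theorem tt_pos {x : ℝ} (hx : 0 < x) : 0 < tt x := by
  have := s2pos
  rw [tt, Real.tanh_eq_sinh_div_cosh]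
  exact div_pos (Real.sinh_pos_iff.2 (by positivity)) (Real.cosh_pos _)

theorem HH_pos {x : ℝ} (hx : 0 < x) : 0 < HH x := by
  have := s2pos
  rw [HH, Real.tanh_eq_sinh_div_cosh]
  exact div_pos (Real.sinh_pos_iff.2 (by positivity)) (Real.cosh_pos _)

theorem HH_lt_one (x : ℝ) : HH x < 1 := by
  have := HS_sq x
  have := SS_pos x
  nlinarith

theorem tt_hasDerivAt (x : ℝ) :
    HasDerivAt tt (1 / (8 * Real.sqrt 2) * (1 - tt x ^ 2)) x := by
  have h := (tanh_hasDerivAt (x / (8 * Real.sqrt 2))).comp x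
    ((hasDerivAt_id x).div_const (8 * Real.sqrt 2))
  refine HasDerivAt.congr_deriv (f := tt) h ?_
  simp only [tt]; ring

theorem HH_hasDerivAt (x : ℝ) :
    HasDerivAt HH (1 / (8 * Real.sqrt 2) * (8 * SS x ^ 2)) x := by
  have h := (tanh_hasDerivAt (x / (Real.sqrt 2))).comp x
    ((hasDerivAt_id x).div_const (Real.sqrt 2))
  refine HasDerivAt.congr_deriv (f := HH) h ?_
  have := HS_sq x
  simp only [HH] at this
  rw [this]
  have := s2pos
  field_simp
  ring

theorem SS_hasDerivAt (x : ℝ) :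
    HasDerivAt SS (1 / (8 * Real.sqrt 2) * (-8 * (HH x * SS x))) x := by
  have h := (sech_hasDerivAt (x / (Real.sqrt 2))).comp x
    ((hasDerivAt_id x).div_const (Real.sqrt 2))
  refine HasDerivAt.congr_deriv (f := SS) h ?_
  simp only [HH, SS]
  have := s2pos
  field_simp

theorem mono_deriv (c t H S dt dH dS : ℝ) (i j k : ℕ) (m : ℝ)
    (ht : dt = m * (1 - t ^ 2)) (hH : dH = m * (8 * S ^ 2)) (hS : dS = m * (-8 * (H * S))) :
    c * ((i : ℝ) * t ^ (i - 1) * dt) * H ^ j * S ^ k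
      + c * t ^ i * ((j : ℝ) * H ^ (j - 1) * dH) * S ^ k
      + c * t ^ i * H ^ j * ((k : ℝ) * S ^ (k - 1) * dS)
    = m * (c * i * t ^ (i - 1) * H ^ j * S ^ k + -c * i * t ^ (i + 1) * H ^ j * S ^ k
      + 8 * c * j * t ^ i * H ^ (j - 1) * S ^ (k + 2) + -8 * c * k * t ^ i * H ^ (j + 1) * S ^ k) := by
  subst ht hH hS
  have e1 : (i : ℝ) * t ^ (i - 1) * t ^ 2 = i * t ^ (i + 1) := by
    cases i with
    | zero => simp
    | succ i => simp only [Nat.add_sub_cancel]; ring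
  have e2 : (k : ℝ) * S ^ (k - 1) * S = k * S ^ k := by
    cases k with
    | zero => simp
    | succ i => simp only [Nat.add_sub_cancel]; ring
  linear_combination (-m * c * H ^ j * S ^ k) * e1 + (c * t ^ i * H ^ j * m * (-8) * H) * e2

theorem EE_hasDerivAt (p : MP) (x : ℝ) :
    HasDerivAt (EE p) (1 / (8 * Real.sqrt 2) * EE (MP.d8 p) x) x := by
  have e : EE (MP.d8 p) x = EE (MP.d8raw p) x := by
    simp only [EE, MP.d8]; exact MP.ev_norm _ _ _ (HS_sq x) _
  rw [e]
  induction p with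
  | nil =>
    have : EE [] = fun _ => (0 : ℝ) := by funext y; simp [EE, MP.ev]
    rw [this]; simpa [EE, MP.ev, MP.d8raw] using hasDerivAt_const x (0 : ℝ)
  | cons q p ih =>
    obtain ⟨c, i, j, k⟩ := q
    have ih := ih (by simp only [EE, MP.d8]; exact MP.ev_norm _ _ _ (HS_sq x) _)
    have h := (((((tt_hasDerivAt x).fun_pow i).const_mul (c : ℝ)).mul
      ((HH_hasDerivAt x).fun_pow j)).mul ((SS_hasDerivAt x).fun_pow k)).add ih
    have key := mono_deriv c (tt x) (HH x) (SS x) _ _ _ i j k (1 / (8 * Real.sqrt 2)) rfl rfl rfl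
    refine HasDerivAt.congr_deriv (f := EE ((c, i, j, k) :: p)) h ?_
    simp only [EE, MP.d8raw, MP.ev]
    push_cast
    simp only [Pi.mul_apply]
    linear_combination key

theorem EE_continuous (p : MP) : Continuous (EE p) :=
  continuous_iff_continuousAt.2 fun x => (EE_hasDerivAt p x).continuousAt

theorem cosh_tendsto : Tendsto Real.cosh atTop atTop := by
  refine tendsto_atTop_mono (fun x => ?_) (Real.tendsto_exp_atTop.atTop_div_const (by norm_num : (0:ℝ) < 2))
  rw [Real.cosh_eq]
  have := Real.exp_pos (-x)
  linarith

theorem sech_tendsto : Tendsto sech atTop (𝓝 0) := by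
  have : sech = fun x => (Real.cosh x)⁻¹ := by funext x; simp [sech]
  rw [this]; exact cosh_tendsto.inv_tendsto_atTop

theorem tanh_tendsto : Tendsto Real.tanh atTop (𝓝 1) := by
  have h : Tendsto (fun x => Real.sqrt (1 - sech x ^ 2)) atTop (𝓝 (Real.sqrt (1 - 0 ^ 2))) :=
    ((tendsto_const_nhds.sub (sech_tendsto.pow 2)).sqrt)
  simp only [ne_eq, OfNat.ofNat_ne_zero, not_false_eq_true, zero_pow, sub_zero, Real.sqrt_one] at h
  refine h.congr' ?_
  filter_upwards [eventually_ge_atTop 0] with x hx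
  have h2 := Real.cosh_sq x
  have hc := (Real.cosh_pos x)
  have : 0 ≤ Real.sinh x := Real.sinh_nonneg_iff.2 hx
  rw [Real.tanh_eq_sinh_div_cosh, sech]
  rw [show 1 - (1 / Real.cosh x) ^ 2 = (Real.sinh x / Real.cosh x) ^ 2 by
    field_simp; linarith]
  exact Real.sqrt_sq (by positivity)

theorem tt_tendsto : Tendsto tt atTop (𝓝 1) :=
  tanh_tendsto.comp (tendsto_id.atTop_div_const (by positivity))
theorem HH_tendsto : Tendsto HH atTop (𝓝 1) :=
  tanh_tendsto.comp (tendsto_id.atTop_div_const (by positivity))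
theorem SS_tendsto : Tendsto SS atTop (𝓝 0) :=
  sech_tendsto.comp (tendsto_id.atTop_div_const (by positivity))

theorem EE_tendsto (p : MP) : Tendsto (EE p) atTop (𝓝 (MP.ev 1 1 0 p)) := by
  induction p with
  | nil =>
    have : EE [] = fun _ => (0 : ℝ) := by funext y; simp [EE, MP.ev]
    rw [this]; simp only [MP.ev]; exact tendsto_const_nhds
  | cons q p ih =>
    obtain ⟨c, i, j, k⟩ := q
    exact (((tt_tendsto.pow i).const_mul (c : ℝ)).mul (HH_tendsto.pow j)).mul
      (SS_tendsto.pow k) |>.add ih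

theorem EE_zero (p : MP) : EE p 0 = MP.ev 0 0 1 p := by
  simp [EE, tt, HH, SS, sech]

theorem rel {x : ℝ} (hx : 0 < x) :
    PL.Rel (ss x) (Real.sinh (x / (8 * Real.sqrt 2)) * Real.cosh (x / (8 * Real.sqrt 2)))
      (tt x) (HH x) (SS x) := by
  have h2 := s2pos
  set u := x / (8 * Real.sqrt 2) with hu
  have h8 : x / Real.sqrt 2 = 2 * (2 * (2 * u)) := by rw [hu]; field_simp; norm_num
  have hu0 : 0 < u := by positivity
  have hs := Real.sinh_pos_iff.2 hu0
  have hc := Real.cosh_pos u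
  have hsq := Real.cosh_sq u
  have hC : Real.cosh (x / Real.sqrt 2) = PL.pev (ss x) PL.Cy := by
    rw [h8, Real.cosh_two_mul (2 * (2 * u)), Real.sinh_two_mul (2 * u), Real.cosh_two_mul (2 * u),
      Real.cosh_two_mul u, Real.sinh_two_mul u]
    simp only [ss, ← hu, PL.pev, PL.Cy]
    push_cast
    have : Real.cosh u ^ 4 = (Real.sinh u ^ 2 + 1) ^ 2 := by rw [← hsq]; ring
    ring_nf
    rw [show Real.cosh u ^ 8 = (Real.cosh u ^ 2) ^ 4 by ring,
      show Real.cosh u ^ 6 = (Real.cosh u ^ 2) ^ 3 by ring,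
      show Real.cosh u ^ 4 = (Real.cosh u ^ 2) ^ 2 by ring, hsq]
    ring
  have hN : Real.sinh (x / Real.sqrt 2)
      = Real.sinh u * Real.cosh u * PL.pev (ss x) PL.Ny := by
    rw [h8, Real.sinh_two_mul, Real.sinh_two_mul (2 * u), Real.cosh_two_mul (2 * u),
      Real.cosh_two_mul u, Real.sinh_two_mul u]
    simp only [ss, ← hu, PL.pev, PL.Ny]
    push_cast
    have e : ∀ s : ℝ, 2 * (2 * (2 * s * Real.cosh u) * (Real.cosh u ^ 2 + s ^ 2)) *
        ((Real.cosh u ^ 2 + s ^ 2) ^ 2 + (2 * s * Real.cosh u) ^ 2)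
       = s * Real.cosh u * (8 * (Real.cosh u ^ 2 + s ^ 2) * ((Real.cosh u ^ 2 + s ^ 2) ^ 2 + 4 * s ^ 2 * Real.cosh u ^ 2)) := by
      intro s; ring
    rw [e, hsq]
    ring
  have hc8 := (Real.cosh_pos (x / Real.sqrt 2)).ne'
  refine ⟨by rw [ss, ← hu]; positivity, by positivity, ?_, ?_, ?_, ?_⟩
  · rw [ss, ← hu, mul_pow, hsq]; ring
  · rw [ss, tt, ← hu, Real.tanh_eq_sinh_div_cosh, add_comm, ← hsq]; field_simp
  · rw [← hN, ← hC, HH, Real.tanh_eq_sinh_div_cosh]; field_simp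
  · rw [← hC, SS, sech]; field_simp

theorem EE_pos_cert {par A K : ℕ} {tr : PL.Tr} {p : MP}
    (h : PL.cert par A K tr p = true) {x : ℝ} (hx : 0 < x) : 0 ≤ EE p x :=
  PL.cert_sound (rel hx) h
theorem EE_pos_certL {par A K : ℕ} {tr : PL.Tr} {p : MP}
    (h : PL.certL par A K tr p = true) {x : ℝ} (hx : 0 < x) (hs : 20 * ss x ≤ 1) : 0 ≤ EE p x :=
  PL.certL_sound (rel hx) h hs
theorem EE_pos_certR {par A K : ℕ} {tr : PL.Tr} {p : MP}
    (h : PL.certR par A K tr p = true) {x : ℝ} (hx : 0 < x) (hs : 1 ≤ 20 * ss x) : 0 ≤ EE p x :=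
  PL.certR_sound (rel hx) h hs

namespace CC
def hP : MP :=
  [(139, 1, 0, 0), (336, 0, 1, 0), (406, 0, 1, 1), (-1959, 0, 1, 2), (2198, 0, 1, 3),
   (-1215, 0, 1, 4), (288, 0, 1, 5)]
def f1P : MP :=
  [(-1000, 0, 1, 0), (4300, 0, 1, 1), (-3572, 0, 1, 2), (919, 0, 1, 3)]
def f2P : MP :=
  [(1000, 0, 1, 0), (632, 1, 0, 0), (-3527, 0, 1, 1), (1196, 0, 1, 2)]
/-- `10^5` times the approximation of the solution `g` (up to the factor `9 √2 / 8`) -/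
def gtP : MP :=
  [(6777, 0, 1, 1), (-6717, 0, 1, 2), (32558, 0, 1, 3), (-3860, 0, 1, 4), (556, 0, 1, 5),
   (-54362, 1, 0, 1), (265369, 1, 0, 2), (-24283, 1, 0, 3), (-658793, 1, 0, 4), (-4775, 2, 1, 1)]
def phP : MP :=
  [(778, 0, 1, 1), (-60, 0, 1, 2), (-4497, 0, 1, 3), (9161, 0, 1, 4), (-9305, 0, 1, 5),
   (4338, 0, 1, 6), (-343, 1, 0, 1), (-3771, 1, 0, 2), (-434, 2, 1, 1)]
def G3P : MP :=
  [(2085, 0, 1, 0), (7462, 0, 1, 2), (181007, 0, 1, 3), (9420928, 0, 1, 4), (87836517, 0, 1, 5),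
   (157814247, 0, 1, 6), (274233, 0, 1, 7), (-68936, 0, 1, 8), (-83424, 1, 0, 2),
   (127795, 1, 0, 3), (-20416688, 1, 0, 4), (-273149542, 1, 0, 5), (-951642394, 1, 0, 6),
   (-798577634, 1, 0, 7)]
def G4P : MP :=
  [(10115, 0, 1, 0), (-92209, 0, 1, 1), (188794, 0, 1, 2), (-10635124, 0, 1, 3),
   (-107769049, 0, 1, 4), (-209079333, 0, 1, 5), (-741428, 0, 1, 6), (45444, 1, 0, 1),
   (31044, 1, 0, 2), (20808777, 1, 0, 3), (323598529, 1, 0, 4), (1217201998, 1, 0, 5),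
   (1063260931, 1, 0, 6), (46664, 2, 1, 1)]
def G5P : MP :=
  [(3554, 0, 1, 0), (1801, 0, 1, 2), (460, 0, 1, 3), (-12007, 0, 1, 4), (139958, 0, 1, 5),
   (-715212, 0, 1, 6), (2015101, 0, 1, 7), (-3222473, 0, 1, 8), (2843908, 0, 1, 9),
   (-1055111, 0, 1, 10)]
def oT : MP := [(1, 0, 0, 0), (-1, 2, 0, 0)]
def FP (P : Int) : MP := [(10000000, 0, 3, 2), (-P, 0, 1, 1)]
/-- `128` times the operator `-∂² - 4 - 3 S²` -/
def L128 (p : MP) : MP :=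
  MP.scal (-1) (MP.d8 (MP.d8 p)) ++ MP.scal (-512) p ++ MP.mul [(-384, 0, 0, 2)] p

def c1P : MP := MP.norm (
   MP.mul oT (MP.mul [(1, 0, 1, 1)] [(6400000, 0, 0, 0), (3200000, 2, 0, 0), (2400000, 4, 0, 0)])
   ++ MP.scal (-100) (MP.mul oT (MP.d8 (MP.d8 hP)))
   ++ MP.scal (-51) (MP.mul (MP.mul oT oT) hP)
   ++ MP.mul [(-313344, 1, 1, 2)] hP
   ++ MP.mul (MP.mul oT [(-7680, 0, 0, 1)]) hP)
def c2P (f : MP) : MP := MP.norm (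
   MP.scal (-2) (MP.mul oT (MP.norm (MP.mul hP (MP.d8 (MP.d8 f))
     ++ MP.scal (-1) (MP.mul (MP.d8 (MP.d8 hP)) f))))
   ++ MP.mul [(-128000, 0, 1, 1), (64000, 2, 1, 1)] f)
def geT (f : MP) : MP := MP.norm (f ++ [(-1, 1, 0, 0)])

def RP (e P : Int) : MP := MP.norm (
  MP.scal e (MP.scal 12800000 (MP.mul [(1, 1, 0, 0)] (MP.d8 (FP P)))
    ++ MP.scal 15196800 (MP.mul oT (FP P)) ++ MP.scal (-10000000) (L128 gtP))
  ++ [(6400000000, 0, 1, 1)])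
def R2P (e P : Int) : MP := MP.norm (
  MP.scal e (MP.scal 1280000 (MP.mul oT (FP P)) ++ MP.scal (-10000000) (L128 phP)
    ++ [(9701120000000, 0, 1, 12)])
  ++ [(25600000000, 0, 1, 1)])
def c5P : MP := MP.norm (
  [(7200000, 0, 2, 12), (2400000, 0, 2, 14), (-6400000, 0, 4, 9), (-3200000, 0, 4, 11),
    (-9600000, 0, 4, 10)] ++ MP.scal (-3) (MP.d8 G5P))
def g3P (P : Int) : MP := MP.norm (
  MP.scal 8 (MP.mul (FP P) gtP) ++ [(-1400000000, 0, 0, 2)] ++ MP.scal (-1000000) (MP.d8 G3P))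
def g4P (P : Int) : MP := MP.norm (
  MP.scal 100000000 (MP.d8 G4P) ++ MP.scal (-8) (MP.mul (MP.mul oT [(1, 0, 2, 1)])
    (MP.mul [(10000000, 0, 2, 1), (-P, 0, 0, 0)] [(10000000, 0, 2, 1), (-P, 0, 0, 0)])))
open PL PL.Tr
def trA : Tr := .N 1 20 .L .L
def trB : Tr := .N 1 20 (.N 1 1 .L (.N 1 1 .L .L)) .L
def trC : Tr := .N 1 20 .L (.N 1 1 .L (.N 1 1 .L .L))
theorem cert_c1 : cert 1 6 9 trA c1P = true := by decide +kernel
theorem cert_c2 : certL 0 5 12 .L (c2P f1P) = true := by decide +kernel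
theorem cert_c3 : certR 0 5 11 trC (c2P f2P) = true := by decide +kernel
theorem cert_h : cert 1 1 6 .L (geT hP) = true := by decide +kernel
theorem cert_f1 : certL 1 1 4 .L (geT f1P) = true := by decide +kernel
theorem cert_f2 : certR 1 1 3 .L (geT f2P) = true := by decide +kernel
theorem cert_Rp0 : cert 1 4 8 trA (RP 1 2945243) = true := by decide +kernel
theorem cert_Rm0 : cert 1 4 8 trA (RP (-1) 2945243) = true := by decide +kernel
theorem cert_Rp1 : cert 1 4 8 trA (RP 1 2945244) = true := by decide +kernel
theorem cert_Rm1 : cert 1 4 8 trA (RP (-1) 2945244) = true := by decide +kernel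
theorem cert_R2p0 : cert 1 4 13 trB (R2P 1 2945243) = true := by decide +kernel
theorem cert_R2m0 : cert 1 4 13 trB (R2P (-1) 2945243) = true := by decide +kernel
theorem cert_R2p1 : cert 1 4 13 trB (R2P 1 2945244) = true := by decide +kernel
theorem cert_R2m1 : cert 1 4 13 trB (R2P (-1) 2945244) = true := by decide +kernel
theorem cert_c5 : cert 0 0 16 trB c5P = true := by decide +kernel
theorem cert_g30 : cert 0 2 11 trA (g3P 2945243) = true := by decide +kernel
theorem cert_g31 : cert 0 2 11 trA (g3P 2945244) = true := by decide +kernel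
theorem cert_g40 : cert 0 3 9 trA (g4P 2945243) = true := by decide +kernel
theorem cert_g41 : cert 0 3 9 trA (g4P 2945244) = true := by decide +kernel
end CC
open MeasureTheory Filter Topology

noncomputable def cc (x : ℝ) : ℝ := Real.cosh (x / (8 * Real.sqrt 2))

theorem cc_one_le (x : ℝ) : 1 ≤ cc x := Real.one_le_cosh _

theorem cc_sq (x : ℝ) : cc x ^ 2 * (1 - tt x ^ 2) = 1 := by
  have h := Real.cosh_sq (x / (8 * Real.sqrt 2))
  have hc := (Real.cosh_pos (x / (8 * Real.sqrt 2))).ne'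
  rw [cc, tt, Real.tanh_eq_sinh_div_cosh]
  field_simp
  linarith

theorem cc_sq_SS (x : ℝ) : cc x ^ 2 * SS x ≤ 1 := by
  have h2 := s2pos
  set u := x / (8 * Real.sqrt 2) with hu
  have h8 : x / Real.sqrt 2 = 8 * u := by rw [hu]; field_simp
  have h1 : Real.cosh (2 * u) ≤ Real.cosh (x / Real.sqrt 2) := by
    rw [Real.cosh_le_cosh, h8, abs_mul, abs_mul]
    have := abs_nonneg u
    norm_num
    linarith
  have h3 := Real.one_le_cosh u
  have h4 : Real.cosh u ^ 2 ≤ Real.cosh (2 * u) := by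
    rw [Real.cosh_two_mul, Real.sinh_sq]; nlinarith
  have h5 := Real.cosh_pos (x / Real.sqrt 2)
  rw [SS, sech, cc, ← hu, mul_one_div, div_le_one h5]
  linarith

theorem cc_lower (x : ℝ) : 1 + tt x ^ 2 / 2 + 3 * tt x ^ 4 / 8 ≤ cc x := by
  have h1 := cc_sq x
  have h2 := cc_one_le x
  have h3 := tt_lt x
  have h0 : 0 ≤ tt x ^ 2 := sq_nonneg _
  have e : tt x ^ 4 = (tt x ^ 2) ^ 2 := by ring
  rw [e]
  generalize tt x ^ 2 = T at *
  by_contra hc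
  push Not at hc
  have : cc x ^ 2 < (1 + T / 2 + 3 * T ^ 2 / 8) ^ 2 := by
    apply pow_lt_pow_left₀ hc (by linarith) (by norm_num)
  have h5 : cc x ^ 2 * (1 - T) < (1 + T / 2 + 3 * T ^ 2 / 8) ^ 2 * (1 - T) :=
    mul_lt_mul_of_pos_right this (by linarith)
  have h6 : (1 + T / 2 + 3 * T ^ 2 / 8) ^ 2 * (1 - T)
      = 1 - (5 / 8 * T ^ 3 + 15 / 64 * T ^ 4 + 9 / 64 * T ^ 5) := by ring
  have : 0 ≤ 5 / 8 * T ^ 3 + 15 / 64 * T ^ 4 + 9 / 64 * T ^ 5 := by positivity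
  linarith

theorem cc_upper (x : ℝ) : cc x * (1 - tt x ^ 2) ≤ 1 - tt x ^ 2 / 2 := by
  have h1 := cc_sq x
  have h2 := cc_one_le x
  have h3 := tt_lt x
  have h0 : 0 ≤ tt x ^ 2 := sq_nonneg _
  generalize tt x ^ 2 = T at *
  by_contra hc
  push Not at hc
  have : (1 - T / 2) ^ 2 < (cc x * (1 - T)) ^ 2 := by
    apply pow_lt_pow_left₀ hc (by linarith) (by norm_num)
  have e : (cc x * (1 - T)) ^ 2 = 1 - T := by
    rw [mul_pow]; linear_combination (1 - T) * h1
  nlinarith [sq_nonneg T]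

namespace CC

noncomputable def m8 : ℝ := 1 / (8 * Real.sqrt 2)
theorem m8_sq : m8 * m8 = 1 / 128 := by
  rw [m8]; have := s2sq; have := s2pos; field_simp; linarith
theorem m8_pos : 0 < m8 := by rw [m8]; have := s2pos; positivity

theorem EE_norm (p : MP) (x : ℝ) : EE (MP.norm p) x = EE p x := MP.ev_norm _ _ _ (HS_sq x) _
theorem EE_append (p q : MP) (x : ℝ) : EE (p ++ q) x = EE p x + EE q x := MP.ev_append _ _ _ _ _
theorem EE_scal (a : Int) (p : MP) (x : ℝ) : EE (MP.scal a p) x = a * EE p x :=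
  MP.ev_scal _ _ _ _ _
theorem EE_mul (p q : MP) (x : ℝ) : EE (MP.mul p q) x = EE p x * EE q x := MP.ev_mul _ _ _ _ _
theorem EE_nil (x : ℝ) : EE [] x = 0 := rfl
theorem EE_cons (c : Int) (i j k : ℕ) (p : MP) (x : ℝ) :
    EE ((c, i, j, k) :: p) x = (c : ℝ) * tt x ^ i * HH x ^ j * SS x ^ k + EE p x := rfl

theorem EE_d8 (p : MP) (x : ℝ) : HasDerivAt (EE p) (m8 * EE (MP.d8 p) x) x := EE_hasDerivAt p x

theorem EE_L128 (p : MP) (x : ℝ) :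
    EE (L128 p) x = -EE (MP.d8 (MP.d8 p)) x - 512 * EE p x - 384 * SS x ^ 2 * EE p x := by
  simp only [L128, EE_append, EE_scal, EE_mul, EE_cons, EE_nil]
  push_cast; ring

/-- the (rescaled) orthogonality weight -/
noncomputable def ZZ (x : ℝ) : ℝ := 500 * (HH x * SS x * cc x)
/-- the modified potential -/
noncomputable def VV (x : ℝ) : ℝ := 1.02 * Vpot x + 0.6 * SS x

theorem Vpot_eq (x : ℝ) :
    Vpot x = 1 / 256 * (1 - tt x ^ 2) + 24 * tt x * cc x ^ 2 * HH x * SS x ^ 2 := by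
  have h := cc_sq x
  have hc := (Real.cosh_pos (x / (8 * Real.sqrt 2))).ne'
  have : sech (x / (8 * Real.sqrt 2)) ^ 2 = 1 - tt x ^ 2 := by
    rw [sech]; rw [cc] at h; field_simp; linarith
  rw [Vpot, this]; rfl

theorem fact1 {x : ℝ} (hx : 0 < x) :
    VV x * EE hP x ≤ ZZ x - m8 * (m8 * EE (MP.d8 (MP.d8 hP)) x) := by
  have h := EE_pos_cert cert_c1 hx
  simp only [c1P, oT, EE_norm, EE_append, EE_scal, EE_mul, EE_cons, EE_nil] at h
  push_cast at h
  have h1 := cc_sq x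
  have h2 := cc_lower x
  have h3 := tt_lt x
  have hH := HH_pos hx
  have hS := SS_pos x
  rw [← mul_assoc, m8_sq, VV, Vpot_eq, ZZ]
  set t := tt x
  set H := HH x
  set S := SS x
  set c := cc x
  set e := EE hP x
  set e2 := EE (MP.d8 (MP.d8 hP)) x
  have hHS : 0 ≤ H * S := by positivity
  have h4 := mul_le_mul_of_nonneg_left h2 hHS
  have hT : 0 < 1 - t ^ 2 := by linarith
  have h5 : 0 ≤ 12800 * (1 - t ^ 2) * (500 * (H * S * c) - 1 / 128 * e2
      - (1.02 * (1 / 256 * (1 - t ^ 2) + 24 * t * c ^ 2 * H * S ^ 2) + 0.6 * S) * e) := by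
    have h6 := mul_le_mul_of_nonneg_left h4 hT.le
    linear_combination h + 6400000 * h6 + (313344 * t * H * S ^ 2 * e) * h1
  have h7 := nonneg_of_mul_nonneg_right h5 (by positivity)
  linarith

theorem fact2_aux {f : MP} {x : ℝ} (hx : 0 < x) (h : 0 ≤ EE (c2P f) x) (hf : 0 ≤ EE f x) :
    ZZ x * EE f x ≤ -(EE hP x * (m8 * (m8 * EE (MP.d8 (MP.d8 f)) x))
      - m8 * (m8 * EE (MP.d8 (MP.d8 hP)) x) * EE f x) := by
  simp only [c2P, oT, EE_norm, EE_append, EE_scal, EE_mul, EE_cons, EE_nil] at h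
  push_cast at h
  have h2 := cc_upper x
  have h3 := tt_lt x
  have hH := HH_pos hx
  have hS := SS_pos x
  rw [← mul_assoc m8, ← mul_assoc m8, m8_sq, ZZ]
  set t := tt x
  set H := HH x
  set S := SS x
  set c := cc x
  set e := EE hP x
  set e2 := EE (MP.d8 (MP.d8 hP)) x
  set g := EE f x
  set g2 := EE (MP.d8 (MP.d8 f)) x
  have hHS : 0 ≤ H * S * g := by positivity
  have h4 := mul_le_mul_of_nonneg_left h2 hHS
  have hT : 0 < 1 - t ^ 2 := by linarith
  have h5 : 0 ≤ 256 * (1 - t ^ 2) * (-(e * (1 / 128 * g2) - 1 / 128 * e2 * g)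
      - 500 * (H * S * c) * g) := by
    linear_combination h + 128000 * h4
  have h7 := nonneg_of_mul_nonneg_right h5 (by positivity)
  linarith

theorem ge_tt {f : MP} {x : ℝ} (h : 0 ≤ EE (geT f) x) : tt x ≤ EE f x := by
  simp only [geT, EE_norm, EE_append, EE_cons, EE_nil] at h
  push_cast at h
  linarith

theorem hP_ge {x : ℝ} (hx : 0 < x) : tt x ≤ EE hP x := ge_tt (EE_pos_cert cert_h hx)
theorem f1P_ge {x : ℝ} (hx : 0 < x) (hs : 20 * ss x ≤ 1) : tt x ≤ EE f1P x :=
  ge_tt (EE_pos_certL cert_f1 hx hs)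
theorem f2P_ge {x : ℝ} (hx : 0 < x) (hs : 1 ≤ 20 * ss x) : tt x ≤ EE f2P x :=
  ge_tt (EE_pos_certR cert_f2 hx hs)

theorem fact2 {x : ℝ} (hx : 0 < x) (hs : 20 * ss x ≤ 1) :
    ZZ x * EE f1P x ≤ -(EE hP x * (m8 * (m8 * EE (MP.d8 (MP.d8 f1P)) x))
      - m8 * (m8 * EE (MP.d8 (MP.d8 hP)) x) * EE f1P x) :=
  fact2_aux hx (EE_pos_certL cert_c2 hx hs) ((tt_pos hx).le.trans (f1P_ge hx hs))
theorem fact3 {x : ℝ} (hx : 0 < x) (hs : 1 ≤ 20 * ss x) :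
    ZZ x * EE f2P x ≤ -(EE hP x * (m8 * (m8 * EE (MP.d8 (MP.d8 f2P)) x))
      - m8 * (m8 * EE (MP.d8 (MP.d8 hP)) x) * EE f2P x) :=
  fact2_aux hx (EE_pos_certR cert_c3 hx hs) ((tt_pos hx).le.trans (f2P_ge hx hs))

end CC
open MeasureTheory Filter Topology

theorem SS_continuous : Continuous SS :=
  continuous_iff_continuousAt.2 fun x => (SS_hasDerivAt x).continuousAt
theorem HH_continuous : Continuous HH :=
  continuous_iff_continuousAt.2 fun x => (HH_hasDerivAt x).continuousAt
theorem tt_continuous : Continuous tt :=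
  continuous_iff_continuousAt.2 fun x => (tt_hasDerivAt x).continuousAt
theorem cc_continuous : Continuous cc := by unfold cc; fun_prop

theorem SS_even (x : ℝ) : SS (-x) = SS x := by
  simp [SS, sech, neg_div, Real.cosh_neg]
theorem HH_odd (x : ℝ) : HH (-x) = -HH x := by
  simp [HH, neg_div, Real.tanh_neg]
theorem tt_odd (x : ℝ) : tt (-x) = -tt x := by
  simp [tt, neg_div, Real.tanh_neg]
theorem cc_even (x : ℝ) : cc (-x) = cc x := by
  simp [cc, neg_div, Real.cosh_neg]

theorem SS_integrable : Integrable SS := by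
  have h1 : IntegrableOn SS (Set.Ioi 0) := by
    have hd : ∀ x ∈ Set.Ioi (0:ℝ), HasDerivAt
        (fun x => Real.sqrt 2 * Real.arctan (Real.sinh (x / Real.sqrt 2))) (SS x) x := by
      intro x _
      have h := (((Real.hasDerivAt_sinh (x / Real.sqrt 2)).comp x
        ((hasDerivAt_id x).div_const (Real.sqrt 2))).arctan).const_mul (Real.sqrt 2)
      refine HasDerivAt.congr_deriv h ?_
      have h2 := s2pos
      have h3 := Real.cosh_sq (x / Real.sqrt 2)
      have h4 := Real.cosh_pos (x / Real.sqrt 2)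
      simp only [Function.comp, id]
      rw [SS, sech, add_comm, ← h3]
      field_simp
    have hl : Tendsto (fun x => Real.sqrt 2 * Real.arctan (Real.sinh (x / Real.sqrt 2))) atTop
        (𝓝 (Real.sqrt 2 * (Real.pi / 2))) := by
      apply Tendsto.const_mul
      have h1 : Tendsto Real.arctan atTop (𝓝 (Real.pi / 2)) :=
        (Real.tendsto_arctan_atTop).mono_right nhdsWithin_le_nhds
      refine h1.comp (Real.sinhOrderIso.tendsto_atTop.comp ?_)
      exact tendsto_id.atTop_div_const s2pos
    refine integrableOn_Ioi_deriv_of_nonneg (a := 0) ?_ hd (fun x _ => (SS_pos x).le) hl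
    have : Continuous (fun x => Real.sqrt 2 * Real.arctan (Real.sinh (x / Real.sqrt 2))) :=
      continuous_const.mul (Real.continuous_arctan.comp (Real.continuous_sinh.comp
        (continuous_id.div_const _)))
    exact this.continuousWithinAt
  have h2 : IntegrableOn SS (Set.Iic 0) := by
    have := (integrableOn_Ici_iff_integrableOn_Ioi (μ := volume)).2 h1
    have h3 := (Measure.measurePreserving_neg (volume : Measure ℝ)).integrableOn_comp_preimage
      (Homeomorph.neg ℝ).measurableEmbedding (f := SS) (s := Set.Ici 0)
    have h4 := h3.2 this
    have e : (SS ∘ fun x => -x) = SS := by funext x; exact SS_even x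
    simpa [e] using h4
  have := h2.union h1
  rwa [Set.Iic_union_Ioi, integrableOn_univ] at this

theorem HH_abs (x : ℝ) : |HH x| ≤ 1 := by
  have := HS_sq x
  rw [← sq_le_one_iff_abs_le_one]; nlinarith [sq_nonneg (SS x)]
theorem tt_abs (x : ℝ) : |tt x| ≤ 1 := by
  rw [← sq_le_one_iff_abs_le_one]; exact (tt_lt x).le

theorem Vpot_continuous : Continuous Vpot := by
  have : Vpot = fun x => 1 / 256 * (1 - tt x ^ 2) + 24 * tt x * cc x ^ 2 * HH x * SS x ^ 2 :=
    funext CC.Vpot_eq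
  rw [this]
  have := tt_continuous; have := cc_continuous; have := HH_continuous; have := SS_continuous
  fun_prop

theorem Vpot_abs (x : ℝ) : |Vpot x| ≤ 25 := by
  rw [CC.Vpot_eq]
  have h1 := cc_sq_SS x
  have h2 := SS_pos x
  have h3 := SS_le_one x
  have h4 := tt_abs x
  have h5 := HH_abs x
  have h6 := tt_lt x
  have h7 : |tt x * cc x ^ 2 * HH x * SS x ^ 2| ≤ 1 := by
    have e : tt x * cc x ^ 2 * HH x * SS x ^ 2 = tt x * HH x * (cc x ^ 2 * SS x * SS x) := by ring
    rw [e, abs_mul, abs_mul]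
    have h8 : |tt x| * |HH x| ≤ 1 := mul_le_one₀ h4 (abs_nonneg _) h5
    have h9 : |cc x ^ 2 * SS x * SS x| ≤ 1 := by
      rw [abs_of_nonneg (by positivity)]
      exact mul_le_one₀ h1 h2.le h3
    exact mul_le_one₀ h8 (abs_nonneg _) h9
  rw [abs_le] at h7 ⊢
  have := sq_nonneg (tt x)
  constructor <;> nlinarith

namespace CC

theorem pw {h h1 h2 f f1 f2 w w1 Z V v : ℝ} (hh : 0 < h) (hf : 0 < f) (hZ : 0 ≤ Z)
    (k1 : V * h ≤ Z - h2) (k2 : Z * f ≤ -(h * f2 - h2 * f)) :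
    (f2 * f - f1 * f1) / f ^ 2 * (w - v * h) ^ 2 + f1 / f * (2 * (w - v * h) * (w1 - v * h1))
      + (2 * v * ((w1 - v * h1) * h1 + (w - v * h) * h2) + v ^ 2 * (h1 * h1 + h * h2))
      ≤ w1 ^ 2 - V * w ^ 2 + 2 * v * (w * Z) := by
  set q := (Z - h2) / h with hq
  have hqe : q * h = Z - h2 := by rw [hq]; field_simp
  have a1 : V ≤ q := by rw [hq, le_div_iff₀ hh]; exact k1
  have a2 : q * f ≤ - f2 := by
    rw [hq, div_mul_eq_mul_div, div_le_iff₀ hh]; linarith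
  set r := f1 / f with hr
  have b1 : (f2 * f - f1 * f1) / f ^ 2 = f2 / f - r ^ 2 := by
    rw [hr]; field_simp
  have b2 : q ≤ -(f2 / f) := by
    rw [← neg_div, le_div_iff₀ hf]; exact a2
  rw [b1]
  set s := f2 / f
  have c1 := mul_le_mul_of_nonneg_right a1 (sq_nonneg w)
  have c2 := mul_le_mul_of_nonneg_right b2 (sq_nonneg (w - v * h))
  have c3 := sq_nonneg ((w1 - v * h1) - r * (w - v * h))
  have c4 : 0 ≤ v ^ 2 * h * Z := by positivity
  have hZe : Z = q * h + h2 := by linarith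
  rw [hZe] at c4 ⊢
  nlinarith

/-- boundary functional -/
noncomputable def PHI (f : MP) (w : ℝ → ℝ) (v x : ℝ) : ℝ :=
  m8 * EE (MP.d8 f) x / EE f x * (w x - v * EE hP x) ^ 2
    + (2 * v * ((w x - v * EE hP x) * (m8 * EE (MP.d8 hP) x))
      + v ^ 2 * (EE hP x * (m8 * EE (MP.d8 hP) x)))

noncomputable def PSI (w : ℝ → ℝ) (v x : ℝ) : ℝ :=
  deriv w x ^ 2 - VV x * w x ^ 2 + 2 * v * (w x * ZZ x)

theorem PHI_deriv {f : MP} {w : ℝ → ℝ} (hw : Differentiable ℝ w) (v : ℝ) {x : ℝ} (hx : 0 < x)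
    (hf : 0 < EE f x)
    (h2 : ZZ x * EE f x ≤ -(EE hP x * (m8 * (m8 * EE (MP.d8 (MP.d8 f)) x))
      - m8 * (m8 * EE (MP.d8 (MP.d8 hP)) x) * EE f x)) :
    ∃ D, HasDerivAt (PHI f w v) D x ∧ D ≤ PSI w v x := by
  have hhp : 0 < EE hP x := (tt_pos hx).trans_le (hP_ge hx)
  have hZ : 0 ≤ ZZ x := by
    have := HH_pos hx; have := SS_pos x; have := cc_one_le x
    rw [ZZ]; positivity
  refine ⟨_, ?_, pw (f1 := m8 * EE (MP.d8 f) x) (h1 := m8 * EE (MP.d8 hP) x) (w := w x)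
    (w1 := deriv w x) (v := v) hhp hf hZ (fact1 hx) h2⟩
  have d1 := EE_d8 f x
  have d2 := (EE_d8 (MP.d8 f) x).const_mul m8
  have d3 := EE_d8 hP x
  have d4 := (EE_d8 (MP.d8 hP) x).const_mul m8
  have d5 := (hw x).hasDerivAt
  have d6 := d5.sub (d3.const_mul v)
  have d7 := ((d2.div d1 hf.ne').mul (d6.pow 2)).add
    (((d6.mul d4).const_mul (2 * v)).add ((d3.mul d4).const_mul (v ^ 2)))
  refine HasDerivAt.congr_deriv (f := PHI f w v) d7 ?_
  simp only [Pi.sub_apply, Pi.pow_apply, Pi.div_apply]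
  push_cast
  ring

theorem tendsto_zero_w {w : ℝ → ℝ} (hw : Differentiable ℝ w)
    (h1 : Integrable (fun x => (w x) ^ 2)) (h2 : Integrable (fun x => (deriv w x) ^ 2)) :
    Tendsto w atTop (𝓝 0) := by
  have hi : Integrable (fun x => 2 * w x * deriv w x) := by
    refine (h1.add h2).mono' ?_ (ae_of_all _ fun x => ?_)
    · exact ((hw.continuous.measurable.const_mul 2).mul (measurable_deriv w)).aestronglyMeasurable
    · rw [Real.norm_eq_abs]
      simp only [Pi.add_apply]
      rw [abs_le]
      constructor <;> nlinarith [sq_nonneg (w x + deriv w x), sq_nonneg (w x - deriv w x)]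
  have hd : ∀ x ∈ Set.Ioi (0:ℝ), HasDerivAt (fun x => w x ^ 2) (2 * w x * deriv w x) x := by
    intro x _
    refine HasDerivAt.congr_deriv ((hw x).hasDerivAt.pow 2) ?_
    simp
  have h3 := tendsto_zero_of_hasDerivAt_of_integrableOn_Ioi hd hi.integrableOn h1.integrableOn
  have h4 := (Real.continuous_sqrt.tendsto 0).comp h3
  simp only [Real.sqrt_zero] at h4
  rw [tendsto_zero_iff_abs_tendsto_zero]
  refine h4.congr fun x => ?_
  simp [Real.sqrt_sq_eq_abs]

theorem ZZ_continuous : Continuous ZZ := by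
  have := cc_continuous; have := HH_continuous; have := SS_continuous
  unfold ZZ; fun_prop

theorem ZZ_sq (x : ℝ) : ZZ x ^ 2 ≤ 250000 * SS x := by
  have h1 := cc_sq_SS x
  have h2 := SS_pos x
  have h5 := HH_abs x
  have h6 : HH x ^ 2 ≤ 1 := by rwa [sq_le_one_iff_abs_le_one]
  have e : ZZ x ^ 2 = 250000 * (HH x ^ 2 * (cc x ^ 2 * SS x) * SS x) := by rw [ZZ]; ring
  rw [e]
  have : HH x ^ 2 * (cc x ^ 2 * SS x) ≤ 1 := mul_le_one₀ h6 (by positivity) h1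
  nlinarith

theorem int_wZZ {w : ℝ → ℝ} (hw : Differentiable ℝ w)
    (h1 : Integrable (fun x => (w x) ^ 2)) : Integrable (fun x => w x * ZZ x) := by
  refine (h1.add (SS_integrable.const_mul 250000)).mono' ?_ (ae_of_all _ fun x => ?_)
  · exact (hw.continuous.mul ZZ_continuous).aestronglyMeasurable
  · rw [Real.norm_eq_abs]
    simp only [Pi.add_apply]
    have := ZZ_sq x
    rw [abs_le]
    constructor <;> nlinarith [sq_nonneg (w x + ZZ x), sq_nonneg (w x - ZZ x)]

theorem int_bdd {w b : ℝ → ℝ} (hw : Integrable w) (hb : Continuous b) {C : ℝ}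
    (hC : ∀ x, |b x| ≤ C) : Integrable (fun x => b x * w x) :=
  hw.bdd_mul hb.aestronglyMeasurable (ae_of_all _ hC)

theorem int_VV {w : ℝ → ℝ} 
    (h1 : Integrable (fun x => (w x) ^ 2)) : Integrable (fun x => VV x * w x ^ 2) := by
  refine int_bdd h1 (b := VV) (C := 27) ?_ ?_
  · have := Vpot_continuous; have := SS_continuous
    unfold VV; fun_prop
  · intro x
    have h1 := Vpot_abs x
    have h2 := SS_pos x
    have h3 := SS_le_one x
    rw [abs_le] at h1 ⊢
    rw [VV]
    constructor <;> linarith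

theorem int_PSI {w : ℝ → ℝ} (hw : Differentiable ℝ w) (v : ℝ)
    (h1 : Integrable (fun x => (w x) ^ 2)) (h2 : Integrable (fun x => (deriv w x) ^ 2)) :
    Integrable (PSI w v) :=
  (h2.sub (int_VV h1)).add ((int_wZZ hw h1).const_mul (2 * v))

noncomputable def x0 : ℝ := 8 * Real.sqrt 2 * Real.arsinh (Real.sqrt (1 / 20))

theorem x0_pos : 0 < x0 := by
  have := s2pos
  have : 0 < Real.arsinh (Real.sqrt (1 / 20)) := by
    rw [Real.arsinh_pos_iff]; positivity
  rw [x0]; positivity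

theorem ss_le {x : ℝ} (hx : 0 < x) (h : x ≤ x0) : 20 * ss x ≤ 1 := by
  have h2 := s2pos
  have h3 : x / (8 * Real.sqrt 2) ≤ Real.arsinh (Real.sqrt (1 / 20)) := by
    rw [div_le_iff₀ (by positivity)]; rw [x0] at h; linarith
  have h4 := Real.sinh_le_sinh.2 h3
  rw [Real.sinh_arsinh] at h4
  have h5 : 0 < Real.sinh (x / (8 * Real.sqrt 2)) := by
    rw [Real.sinh_pos_iff]; positivity
  have h6 : ss x ≤ Real.sqrt (1 / 20) ^ 2 := pow_le_pow_left₀ h5.le h4 2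
  rw [Real.sq_sqrt (by norm_num)] at h6
  linarith

theorem le_ss {x : ℝ} (h : x0 ≤ x) : 1 ≤ 20 * ss x := by
  have h2 := s2pos
  have h3 : Real.arsinh (Real.sqrt (1 / 20)) ≤ x / (8 * Real.sqrt 2) := by
    rw [le_div_iff₀ (by positivity)]; rw [x0] at h; linarith
  have h4 := Real.sinh_le_sinh.2 h3
  rw [Real.sinh_arsinh] at h4
  have h6 : Real.sqrt (1 / 20) ^ 2 ≤ ss x := pow_le_pow_left₀ (Real.sqrt_nonneg _) h4 2
  rw [Real.sq_sqrt (by norm_num)] at h6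
  linarith

theorem f1_zero : EE f1P 0 = 0 := by
  rw [EE_zero]; norm_num [f1P, MP.ev]
theorem hP_zero : EE hP 0 = 0 := by
  rw [EE_zero]; norm_num [hP, MP.ev]

theorem d8_lim (p : MP) : Tendsto (EE (MP.d8 p)) atTop (𝓝 (MP.ev 1 1 0 (MP.d8raw p))) := by
  have h := EE_tendsto (MP.d8 p)
  rwa [MP.d8, MP.ev_norm _ _ _ (by norm_num)] at h
theorem hP'_lim : Tendsto (EE (MP.d8 hP)) atTop (𝓝 0) := by
  have h := d8_lim hP
  norm_num [hP, MP.d8raw, MP.ev] at h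
  exact h
theorem f2P'_lim : Tendsto (EE (MP.d8 f2P)) atTop (𝓝 0) := by
  have h := d8_lim f2P
  norm_num [f2P, MP.d8raw, MP.ev] at h
  exact h
theorem f2P_lim : Tendsto (EE f2P) atTop (𝓝 1632) := by
  have h := EE_tendsto f2P
  norm_num [f2P, MP.ev] at h
  exact h
theorem f1'_zero : EE (MP.d8 f1P) 0 ≠ 0 := by
  rw [EE_zero, MP.d8, MP.ev_norm _ _ _ (by norm_num)]
  norm_num [f1P, MP.ev, MP.d8raw]

theorem PHI_cont {f : MP} {w : ℝ → ℝ} (hw : Differentiable ℝ w) (v : ℝ) {x : ℝ}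
    (hf : EE f x ≠ 0) : ContinuousAt (PHI f w v) x := by
  have c1 := (EE_continuous f).continuousAt (x := x)
  have c2 := (EE_continuous (MP.d8 f)).continuousAt (x := x)
  have c3 := (EE_continuous hP).continuousAt (x := x)
  have c4 := (EE_continuous (MP.d8 hP)).continuousAt (x := x)
  have c5 := hw.continuous.continuousAt (x := x)
  unfold PHI
  fun_prop (disch := exact hf)

theorem PHI1_cont0 {w : ℝ → ℝ} (hw : Differentiable ℝ w) (hw0 : w 0 = 0) (v : ℝ) :
    ContinuousWithinAt (PHI f1P w v) (Set.Ici 0) 0 := by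
  have key : Tendsto (fun x => (w x - v * EE hP x) / EE f1P x) (𝓝[≠] 0)
      (𝓝 ((deriv w 0 - v * (m8 * EE (MP.d8 hP) 0)) / (m8 * EE (MP.d8 f1P) 0))) := by
    have a1 := ((hw 0).hasDerivAt.sub ((EE_d8 hP 0).const_mul v)).tendsto_slope_zero
    have a2 := (EE_d8 f1P 0).tendsto_slope_zero
    refine ((a1.div a2 (mul_ne_zero m8_pos.ne' f1'_zero))).congr' ?_
    filter_upwards [self_mem_nhdsWithin] with t ht
    have ht' : t ≠ 0 := ht
    simp only [zero_add, f1_zero, hP_zero, hw0, Pi.sub_apply, smul_eq_mul, Pi.div_apply]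
    rw [mul_zero, sub_zero, sub_zero, sub_zero, mul_div_mul_left _ _ (inv_ne_zero ht')]
  have c2 := ((EE_continuous (MP.d8 f1P)).tendsto 0).mono_left (nhdsWithin_le_nhds (s := {0}ᶜ))
  have c3 := ((EE_continuous hP).tendsto 0).mono_left (nhdsWithin_le_nhds (s := {0}ᶜ))
  have c4 := ((EE_continuous (MP.d8 hP)).tendsto 0).mono_left (nhdsWithin_le_nhds (s := {0}ᶜ))
  have c5 := (hw.continuous.tendsto 0).mono_left (nhdsWithin_le_nhds (s := {0}ᶜ))
  have c6 := c5.sub (c3.const_mul v)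
  have T := (((c2.const_mul m8).mul c6).mul key).add
    (((c6.mul (c4.const_mul m8)).const_mul (2 * v)).add
      ((c3.mul (c4.const_mul m8)).const_mul (v ^ 2)))
  have e0 : PHI f1P w v 0 = 0 := by simp [PHI, hP_zero, hw0]
  have : ContinuousAt (PHI f1P w v) 0 := by
    rw [continuousAt_iff_punctured_nhds, e0]
    simp only [hP_zero, hw0, mul_zero, sub_zero, zero_mul, add_zero] at T
    refine T.congr fun x => ?_
    rw [PHI]; ring
  exact this.continuousWithinAt

theorem PHI2_lim {w : ℝ → ℝ} (hw : Tendsto w atTop (𝓝 0)) (v : ℝ) :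
    Tendsto (PHI f2P w v) atTop (𝓝 0) := by
  have c3 := EE_tendsto hP
  have c6 := hw.sub (c3.const_mul v)
  have T := (((f2P'_lim.const_mul m8).div f2P_lim (by norm_num)).mul (c6.pow 2)).add
    (((c6.mul (hP'_lim.const_mul m8)).const_mul (2 * v)).add
      ((c3.mul (hP'_lim.const_mul m8)).const_mul (v ^ 2)))
  simp only [mul_zero, zero_div, zero_mul, add_zero] at T
  exact T

theorem halfline {w : ℝ → ℝ} (hw : Differentiable ℝ w) (hw0 : w 0 = 0)
    (h1 : Integrable (fun x => (w x) ^ 2)) (h2 : Integrable (fun x => (deriv w x) ^ 2)) :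
    ∃ v, 0 ≤ ∫ x in Set.Ioi (0:ℝ), PSI w v x := by
  set v := w x0 / EE hP x0 with hv
  have hh0 : 0 < EE hP x0 := (tt_pos x0_pos).trans_le (hP_ge x0_pos)
  have hwx : w x0 - v * EE hP x0 = 0 := by rw [hv]; field_simp; ring
  have hI := int_PSI hw v h1 h2
  have hf1 : ∀ x, 0 < x → x ≤ x0 → 0 < EE f1P x := fun x hx hx0 =>
    (tt_pos hx).trans_le (f1P_ge hx (ss_le hx hx0))
  have hf2 : ∀ x, x0 ≤ x → 0 < EE f2P x := fun x hx =>
    (tt_pos (x0_pos.trans_le hx)).trans_le (f2P_ge (x0_pos.trans_le hx) (le_ss hx))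
  have s1 : PHI f1P w v x0 - PHI f1P w v 0 ≤ ∫ y in (0:ℝ)..x0, PSI w v y := by
    have hD : ∀ x : ℝ, ∃ D, x ∈ Set.Ioo 0 x0 → HasDerivAt (PHI f1P w v) D x ∧ D ≤ PSI w v x := by
      intro x
      by_cases hx : x ∈ Set.Ioo 0 x0
      · obtain ⟨D, hD⟩ := PHI_deriv (f := f1P) hw v hx.1 (hf1 x hx.1 hx.2.le)
          (fact2 hx.1 (ss_le hx.1 hx.2.le))
        exact ⟨D, fun _ => hD⟩
      · exact ⟨0, fun h => absurd h hx⟩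
    choose D hD using hD
    refine intervalIntegral.sub_le_integral_of_hasDeriv_right_of_le (g' := D) x0_pos.le ?_
      (fun x hx => ((hD x hx).1).hasDerivWithinAt) hI.integrableOn (fun x hx => (hD x hx).2)
    intro x hx
    rcases hx.1.eq_or_lt with h | h
    · rw [← h]
      exact (PHI1_cont0 hw hw0 v).mono (fun y hy => hy.1)
    · exact (PHI_cont hw v (hf1 x h hx.2).ne').continuousWithinAt
  have s2 : ∀ R, x0 ≤ R → PHI f2P w v R - PHI f2P w v x0 ≤ ∫ y in x0..R, PSI w v y := by
    intro R hR
    have hD : ∀ x : ℝ, ∃ D, x ∈ Set.Ioo x0 R → HasDerivAt (PHI f2P w v) D x ∧ D ≤ PSI w v x := by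
      intro x
      by_cases hx : x ∈ Set.Ioo x0 R
      · have hx0 := x0_pos.trans hx.1
        obtain ⟨D, hD⟩ := PHI_deriv (f := f2P) hw v hx0 (hf2 x hx.1.le)
          (fact3 hx0 (le_ss hx.1.le))
        exact ⟨D, fun _ => hD⟩
      · exact ⟨0, fun h => absurd h hx⟩
    choose D hD using hD
    refine intervalIntegral.sub_le_integral_of_hasDeriv_right_of_le (g' := D) hR ?_
      (fun x hx => ((hD x hx).1).hasDerivWithinAt) hI.integrableOn (fun x hx => (hD x hx).2)
    intro x hx
    exact (PHI_cont hw v (hf2 x hx.1).ne').continuousWithinAt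
  have e0 : PHI f1P w v 0 = 0 := by simp [PHI, hP_zero, hw0]
  have e1 : PHI f1P w v x0 = PHI f2P w v x0 := by simp [PHI, hwx]
  have s3 : ∀ R, x0 ≤ R → PHI f2P w v R ≤ ∫ y in (0:ℝ)..R, PSI w v y := by
    intro R hR
    rw [← intervalIntegral.integral_add_adjacent_intervals (b := x0)
      hI.intervalIntegrable hI.intervalIntegrable]
    linarith [s2 R hR]
  refine ⟨v, le_of_tendsto_of_tendsto (PHI2_lim (tendsto_zero_w hw h1 h2) v)
    (intervalIntegral_tendsto_integral_Ioi 0 hI.integrableOn tendsto_id) ?_⟩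
  filter_upwards [eventually_ge_atTop x0] with R hR
  exact s3 R hR
end CC
open MeasureTheory Filter Topology

theorem integral_even_Ioi {f : ℝ → ℝ} (hf : ∀ x, f (-x) = f x) :
    ∫ x, f x = 2 * ∫ x in Set.Ioi (0:ℝ), f x := by
  rw [← integral_comp_abs]
  congr 1
  funext x
  rcases abs_choice x with h | h <;> rw [h]
  exact (hf x).symm

theorem deriv_even {w : ℝ → ℝ} (hw : ∀ x, w (-x) = -w x) (x : ℝ) : deriv w (-x) = deriv w x := by
  have h1 := deriv_comp_neg w x
  have e : (fun x => w (-x)) = fun x => -w x := funext hw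
  rw [e] at h1
  have h2 : deriv (fun x => -w x) x = -deriv w x := deriv.fun_neg
  linarith [h1, h2]

noncomputable def Cy : ℝ := (2 : ℝ) ^ (-(3 : ℝ) / 4) * Real.sqrt 3
theorem Cy_pos : 0 < Cy := by unfold Cy; positivity
theorem Cy_sq : Cy ^ 2 = 3 * Real.sqrt 2 / 4 := by
  have h1 : ((2 : ℝ) ^ (-(3 : ℝ) / 4)) ^ 2 = Real.sqrt 2 / 4 := by
    rw [← Real.rpow_natCast, ← Real.rpow_mul (by norm_num), Real.sqrt_eq_rpow]
    have : (4:ℝ) = 2 ^ (2:ℝ) := by norm_num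
    rw [this, ← Real.rpow_sub (by norm_num)]
    norm_num
  rw [Cy, mul_pow, h1, Real.sq_sqrt (by norm_num)]; ring

theorem Y1_eq (x : ℝ) : Y1 x = Cy * (HH x * SS x) := by
  rw [Y1, Cy, HH, SS]; ring
theorem Z1_eq (x : ℝ) : Z1 x = Cy * (HH x * SS x * cc x) := by
  rw [Z1, Y1_eq, cc]; ring

namespace CC

theorem VV_even (x : ℝ) : VV (-x) = VV x := by
  simp only [VV, Vpot_eq, tt_odd, HH_odd, SS_even, cc_even]; ring
theorem ZZ_odd (x : ℝ) : ZZ (-x) = -ZZ x := by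
  simp only [ZZ, HH_odd, SS_even, cc_even]; ring

theorem partB {w : ℝ → ℝ} (hodd : ∀ x, w (-x) = -w x) (hw : Differentiable ℝ w)
    (h1 : Integrable (fun x => (w x) ^ 2)) (h2 : Integrable (fun x => (deriv w x) ^ 2))
    (h3 : ∫ x, w x * Z1 x = 0) :
    0.02 * (∫ x, deriv w x ^ 2) + 0.6 * (∫ x, SS x * w x ^ 2) ≤
      1.02 * ∫ x, (deriv w x ^ 2 - Vpot x * w x ^ 2) := by
  have hw0 : w 0 = 0 := by have := hodd 0; rw [neg_zero] at this; linarith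
  obtain ⟨v, hv⟩ := halfline hw hw0 h1 h2
  have hev : ∀ x, PSI w v (-x) = PSI w v x := by
    intro x; simp only [PSI, deriv_even hodd, VV_even, ZZ_odd, hodd]; ring
  have e1 := integral_even_Ioi hev
  have hz : ∫ x, w x * ZZ x = 0 := by
    have : ∀ x, w x * ZZ x = 500 / Cy * (w x * Z1 x) := by
      intro x
      have := Cy_pos
      rw [ZZ, Z1_eq]; field_simp
    simp only [this]
    rw [integral_const_mul, h3, mul_zero]
  have iS : Integrable (fun x => SS x * w x ^ 2) := int_bdd h1 SS_continuous (C := 1) (by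
    intro x; rw [abs_of_pos (SS_pos x)]; exact SS_le_one x)
  have iV : Integrable (fun x => Vpot x * w x ^ 2) := int_bdd h1 Vpot_continuous Vpot_abs
  have e2 : ∫ x, PSI w v x = (∫ x, deriv w x ^ 2)
      - (1.02 * (∫ x, Vpot x * w x ^ 2) + 0.6 * (∫ x, SS x * w x ^ 2)) := by
    have a1 : ∫ x, PSI w v x = ∫ x, ((deriv w x ^ 2 - (1.02 * (Vpot x * w x ^ 2)
        + 0.6 * (SS x * w x ^ 2))) + 2 * v * (w x * ZZ x)) := by
      congr 1; funext x; rw [PSI, VV]; ring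
    have j1 : Integrable (fun x => 1.02 * (Vpot x * w x ^ 2)) := iV.const_mul _
    have j2 : Integrable (fun x => 0.6 * (SS x * w x ^ 2)) := iS.const_mul _
    have j3 : Integrable (fun x => 1.02 * (Vpot x * w x ^ 2) + 0.6 * (SS x * w x ^ 2)) := j1.add j2
    have j4 : Integrable (fun x => deriv w x ^ 2 - (1.02 * (Vpot x * w x ^ 2)
      + 0.6 * (SS x * w x ^ 2))) := h2.sub j3
    have j5 : Integrable (fun x => 2 * v * (w x * ZZ x)) := (int_wZZ hw h1).const_mul _
    rw [a1, integral_add j4 j5, integral_sub h2 j3, integral_add j1 j2, integral_const_mul,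
      integral_const_mul, integral_const_mul, hz]
    ring
  rw [integral_sub h2 iV]
  linarith

end CC
open MeasureTheory Filter Topology

namespace CC
noncomputable def pp : ℝ := 3 * Real.pi / 32
noncomputable def c9 : ℝ := 9 * Real.sqrt 2 / 8
noncomputable def FF (x : ℝ) : ℝ := HH x ^ 3 * SS x ^ 2 - pp * (HH x * SS x)

theorem int_H4S3 : ∫ x, HH x ^ 4 * SS x ^ 3 = Real.sqrt 2 * Real.pi / 16 := by
  have hev : ∀ x, HH (-x) ^ 4 * SS (-x) ^ 3 = HH x ^ 4 * SS x ^ 3 := by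
    intro x; rw [HH_odd, SS_even]; ring
  rw [integral_even_Ioi (f := fun x => HH x ^ 4 * SS x ^ 3) hev]
  have h2 := s2pos
  have hd : ∀ x : ℝ, HasDerivAt (fun x => Real.sqrt 2 * (Real.arctan (Real.sinh (x / Real.sqrt 2)) / 16
      + (HH x * SS x / 16 - 7 / 24 * (HH x * SS x ^ 3) + HH x * SS x ^ 5 / 6)))
      (HH x ^ 4 * SS x ^ 3) x := by
    intro x
    have d0 := ((Real.hasDerivAt_sinh (x / Real.sqrt 2)).comp x
        ((hasDerivAt_id x).div_const (Real.sqrt 2))).arctan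
    have d0' : HasDerivAt (fun x => Real.arctan (Real.sinh (x / Real.sqrt 2)))
        (1 / Real.sqrt 2 * SS x) x := by
      refine HasDerivAt.congr_deriv d0 ?_
      have h3 := Real.cosh_sq (x / Real.sqrt 2)
      have h4 := Real.cosh_pos (x / Real.sqrt 2)
      simp only [Function.comp, id]
      rw [SS, sech, add_comm, ← h3]
      field_simp
    have dH := HH_hasDerivAt x
    have dS := SS_hasDerivAt x
    have d := ((d0'.div_const 16).add ((((dH.mul dS).div_const 16).sub
      ((dH.mul (dS.pow 3)).const_mul (7/24))).add ((dH.mul (dS.pow 5)).div_const 6))).const_mul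
        (Real.sqrt 2)
    refine HasDerivAt.congr_deriv d ?_
    have hq := HS_sq x
    simp only [Pi.pow_apply]
    have hm : Real.sqrt 2 * (1 / (8 * Real.sqrt 2)) = 1 / 8 := by field_simp
    have hm' : 1 / Real.sqrt 2 = 8 * (1 / (8 * Real.sqrt 2)) := by field_simp
    rw [hm']
    generalize 1 / (8 * Real.sqrt 2) = m at *
    generalize HH x = H at *
    generalize SS x = S at *
    push_cast
    linear_combination (8 * (S / 16 + (S ^ 3 - H ^ 2 * S) / 16 - 7 / 24 * (S ^ 5 - 3 * H ^ 2 * S ^ 3)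
      + (S ^ 7 - 5 * H ^ 2 * S ^ 5) / 6)) * hm
      + (-S / 16 + 7 / 8 * S ^ 3 - 5 / 6 * S ^ 5 - S ^ 3 * (H ^ 2 + 1 - S ^ 2)) * hq
  have hl : Tendsto (fun x => Real.sqrt 2 * (Real.arctan (Real.sinh (x / Real.sqrt 2)) / 16
      + (HH x * SS x / 16 - 7 / 24 * (HH x * SS x ^ 3) + HH x * SS x ^ 5 / 6))) atTop
      (𝓝 (Real.sqrt 2 * (Real.pi / 2 / 16
      + (1 * 0 / 16 - 7 / 24 * (1 * 0 ^ 3) + 1 * 0 ^ 5 / 6)))) := by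
    have h1 : Tendsto Real.arctan atTop (𝓝 (Real.pi / 2)) :=
      (Real.tendsto_arctan_atTop).mono_right nhdsWithin_le_nhds
    have h3 : Tendsto (fun x => Real.arctan (Real.sinh (x / Real.sqrt 2))) atTop
        (𝓝 (Real.pi / 2)) :=
      h1.comp (Real.sinhOrderIso.tendsto_atTop.comp (tendsto_id.atTop_div_const s2pos))
    have tH := HH_tendsto
    have tS := SS_tendsto
    exact ((h3.div_const 16).add ((((tH.mul tS).div_const 16).sub
      ((tH.mul (tS.pow 3)).const_mul (7/24))).add ((tH.mul (tS.pow 5)).div_const 6))).const_mul _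
  rw [integral_Ioi_of_hasDerivAt_of_nonneg' (fun x _ => hd x) (fun x _ => ?_) hl]
  · have : HH 0 = 0 := by simp [HH]
    simp [this]; ring
  · have := SS_pos x; positivity

theorem fsrc_eq (x : ℝ) : fsrc x = c9 * FF x := by
  have hI : ∫ y, Hkink y * Y1 y ^ 3 = Cy ^ 3 * (Real.sqrt 2 * Real.pi / 16) := by
    rw [← int_H4S3, ← integral_const_mul]
    congr 1; funext y
    rw [Y1_eq, show Hkink y = HH y from rfl]; ring
  rw [fsrc, hI, Y1_eq, show Hkink x = HH x from rfl, FF, c9, pp]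
  have h1 := Cy_sq
  have h2 := s2sq
  have e : Cy ^ 4 = (3 * Real.sqrt 2 / 4) ^ 2 := by rw [← h1]; ring
  have e4 : Cy ^ 4 = 9 / 8 := by rw [e]; linear_combination (9/16) * h2
  linear_combination (3/2 * HH x ^ 3 * SS x ^ 2) * h1
    - (3 / 2 * (Real.sqrt 2 * Real.pi / 16) * HH x * SS x) * e4

/-- `8 √2` times the derivative of `FF` -/
noncomputable def dF (x : ℝ) : ℝ := 24 * HH x ^ 2 * SS x ^ 4 - 16 * HH x ^ 4 * SS x ^ 2
  - pp * (8 * SS x ^ 3 - 8 * HH x ^ 2 * SS x)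

theorem FF_hasDerivAt (x : ℝ) : HasDerivAt FF (m8 * dF x) x := by
  have dH := HH_hasDerivAt x
  have dS := SS_hasDerivAt x
  refine HasDerivAt.congr_deriv (f := FF) (((dH.pow 3).mul (dS.pow 2)).sub
    ((dH.mul dS).const_mul pp)) ?_
  simp only [Pi.pow_apply]
  rw [dF, m8]
  push_cast
  ring

theorem EE_d8_FP (P : Int) (x : ℝ) : EE (MP.d8 (FP P)) x =
    10000000 * (24 * HH x ^ 2 * SS x ^ 4 - 16 * HH x ^ 4 * SS x ^ 2)
      - P * (8 * SS x ^ 3 - 8 * HH x ^ 2 * SS x) := by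
  rw [MP.d8, EE_norm]
  simp only [FP, MP.d8raw, EE_cons, EE_nil]
  push_cast
  ring
theorem EE_FP (P : Int) (x : ℝ) : EE (FP P) x =
    10000000 * (HH x ^ 3 * SS x ^ 2) - P * (HH x * SS x) := by
  simp only [FP, EE_cons, EE_nil]
  push_cast
  ring

theorem pp_lo : 2945243 ≤ 10000000 * pp := by
  have := Real.pi_gt_d20; rw [pp]; norm_num at this ⊢; linarith
theorem pp_hi : 10000000 * pp ≤ 2945244 := by
  have := Real.pi_lt_d20; rw [pp]; norm_num at this ⊢; linarith

/-- convex combination in the parameter -/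
theorem conv_pp {A B : ℝ} (h0 : 0 ≤ A + B * 2945243) (h1 : 0 ≤ A + B * 2945244) :
    0 ≤ A + B * (10000000 * pp) := by
  have h2 := pp_lo
  have h3 := pp_hi
  nlinarith [mul_nonneg (sub_nonneg.2 h2) h1, mul_nonneg (sub_nonneg.2 h3) h0]

end CC
open MeasureTheory Filter Topology

namespace CC
noncomputable def KA (x : ℝ) : ℝ := 1 + SS x ^ 2 / 2
noncomputable def KB (x : ℝ) : ℝ := Real.sqrt 2 * HH x
noncomputable def KC (x : ℝ) : ℝ := -(Real.sqrt 2 / 2 * HH x * SS x ^ 2) - 2 * Real.sqrt 2 * HH x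
noncomputable def KD (x : ℝ) : ℝ := 2 + 2 * SS x ^ 2
noncomputable def K1 (x : ℝ) : ℝ := Real.sin (2 * x) * KA x + Real.cos (2 * x) * KB x
noncomputable def K2 (x : ℝ) : ℝ := Real.cos (2 * x) * KA x - Real.sin (2 * x) * KB x
noncomputable def K1' (x : ℝ) : ℝ := Real.sin (2 * x) * KC x + Real.cos (2 * x) * KD x
noncomputable def K2' (x : ℝ) : ℝ := Real.cos (2 * x) * KC x - Real.sin (2 * x) * KD x

theorem s2inv : 1 / (8 * Real.sqrt 2) = Real.sqrt 2 / 16 := by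
  have := s2pos; have := s2sq; field_simp; linarith

theorem KA_d (x : ℝ) : HasDerivAt KA (-(Real.sqrt 2 / 2 * HH x * SS x ^ 2)) x := by
  refine HasDerivAt.congr_deriv (f := KA) ((((SS_hasDerivAt x).pow 2).div_const 2).const_add 1) ?_
  rw [s2inv]; push_cast; ring
theorem KB_d (x : ℝ) : HasDerivAt KB (SS x ^ 2) x := by
  refine HasDerivAt.congr_deriv (f := KB) ((HH_hasDerivAt x).const_mul _) ?_
  rw [s2inv]; linear_combination (SS x ^ 2 / 2) * s2sq
theorem KC_d (x : ℝ) : HasDerivAt KC (-(SS x ^ 4 / 2) + HH x ^ 2 * SS x ^ 2 - 2 * SS x ^ 2) x := by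
  refine HasDerivAt.congr_deriv (f := KC) ((((HH_hasDerivAt x).const_mul _).mul
    ((SS_hasDerivAt x).pow 2)).neg.sub ((HH_hasDerivAt x).const_mul _)) ?_
  simp only [Pi.pow_apply]
  rw [s2inv]; push_cast
  linear_combination (-(SS x ^ 4 / 4) + HH x ^ 2 * SS x ^ 2 / 2 - SS x ^ 2) * s2sq
theorem KD_d (x : ℝ) : HasDerivAt KD (-(2 * Real.sqrt 2 * HH x * SS x ^ 2)) x := by
  refine HasDerivAt.congr_deriv (f := KD) ((((SS_hasDerivAt x).pow 2).const_mul 2).const_add 2) ?_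
  rw [s2inv]; push_cast; ring

theorem sin2_d (x : ℝ) : HasDerivAt (fun x => Real.sin (2 * x)) (2 * Real.cos (2 * x)) x := by
  refine HasDerivAt.congr_deriv (((hasDerivAt_id x).const_mul 2).sin) ?_
  simp; ring
theorem cos2_d (x : ℝ) : HasDerivAt (fun x => Real.cos (2 * x)) (-(2 * Real.sin (2 * x))) x := by
  refine HasDerivAt.congr_deriv (((hasDerivAt_id x).const_mul 2).cos) ?_
  simp; ring

theorem K1_d (x : ℝ) : HasDerivAt K1 (K1' x) x := by
  refine HasDerivAt.congr_deriv (f := K1) (((sin2_d x).mul (KA_d x)).add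
    ((cos2_d x).mul (KB_d x))) ?_
  simp only [K1', KA, KB, KC, KD]; ring
theorem K2_d (x : ℝ) : HasDerivAt K2 (K2' x) x := by
  refine HasDerivAt.congr_deriv (f := K2) (((cos2_d x).mul (KA_d x)).sub
    ((sin2_d x).mul (KB_d x))) ?_
  simp only [K2', KA, KB, KC, KD]; ring
theorem K1'_d (x : ℝ) : HasDerivAt K1' (-((4 + 3 * SS x ^ 2) * K1 x)) x := by
  refine HasDerivAt.congr_deriv (f := K1') (((sin2_d x).mul (KC_d x)).add
    ((cos2_d x).mul (KD_d x))) ?_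
  simp only [K1, KA, KB, KC, KD]
  linear_combination (Real.sin (2 * x) * SS x ^ 2) * HS_sq x
theorem K2'_d (x : ℝ) : HasDerivAt K2' (-((4 + 3 * SS x ^ 2) * K2 x)) x := by
  refine HasDerivAt.congr_deriv (f := K2') (((cos2_d x).mul (KC_d x)).sub
    ((sin2_d x).mul (KD_d x))) ?_
  simp only [K2, KA, KB, KC, KD]
  linear_combination (Real.cos (2 * x) * SS x ^ 2) * HS_sq x

theorem K_norm (x : ℝ) : K1 x ^ 2 + K2 x ^ 2 ≤ 3 := by
  have h := Real.sin_sq_add_cos_sq (2 * x)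
  have e : K1 x ^ 2 + K2 x ^ 2 = 3 - SS x ^ 2 + SS x ^ 4 / 4 := by
    simp only [K1, K2, KA, KB]
    linear_combination ((1 + SS x ^ 2 / 2) ^ 2 + Real.sqrt 2 ^ 2 * HH x ^ 2) * h
      + HH x ^ 2 * s2sq + 2 * HS_sq x
  have h1 := SS_pos x
  have h2 := SS_le_one x
  have h3 : SS x ^ 2 ≤ 1 := by nlinarith
  rw [e]; nlinarith [sq_nonneg (SS x)]

theorem K'_norm (x : ℝ) : K1' x ^ 2 + K2' x ^ 2 ≤ 36 := by
  have h := Real.sin_sq_add_cos_sq (2 * x)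
  have e : K1' x ^ 2 + K2' x ^ 2 = HH x ^ 2 * (SS x ^ 2 + 4) ^ 2 / 2 + (2 + 2 * SS x ^ 2) ^ 2 := by
    simp only [K1', K2', KC, KD]
    linear_combination ((-(Real.sqrt 2 / 2 * HH x * SS x ^ 2) - 2 * Real.sqrt 2 * HH x) ^ 2
      + (2 + 2 * SS x ^ 2) ^ 2) * h + HH x ^ 2 * (SS x ^ 2 + 4) ^ 2 / 4 * s2sq
  have h1 := SS_pos x
  have h2 := SS_le_one x
  have h3 : SS x ^ 2 ≤ 1 := by nlinarith
  rw [e, HS_sq]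
  nlinarith [sq_nonneg (SS x), mul_nonneg (sq_nonneg (SS x)) (sub_nonneg.2 h3),
    mul_nonneg (mul_nonneg (sq_nonneg (SS x)) (sq_nonneg (SS x))) (sub_nonneg.2 h3)]

theorem K_wron (x : ℝ) : K1' x * K2 x - K2' x * K1 x = 6 := by
  have h := Real.sin_sq_add_cos_sq (2 * x)
  simp only [K1, K2, K1', K2', KA, KB, KC, KD]
  linear_combination ((1 + SS x ^ 2 / 2) * (2 + 2 * SS x ^ 2) +
    (Real.sqrt 2 * HH x) * (Real.sqrt 2 / 2 * HH x * SS x ^ 2 + 2 * Real.sqrt 2 * HH x)) * h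
    + (HH x ^ 2 * SS x ^ 2 / 2 + 2 * HH x ^ 2) * s2sq + (SS x ^ 2 + 4) * HS_sq x

theorem lim_le {f f' : ℝ → ℝ} {x0 l : ℝ} (hd : ∀ x, HasDerivAt f (f' x) x)
    (h : ∀ x, x0 < x → f' x ≤ 0) (hl : Tendsto f atTop (𝓝 l)) : l ≤ f x0 := by
  have ha : AntitoneOn f (Set.Ici x0) := by
    refine antitoneOn_of_deriv_nonpos (convex_Ici x0)
      (fun x _ => (hd x).continuousAt.continuousWithinAt)
      (fun x _ => (hd x).differentiableAt.differentiableWithinAt) ?_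
    intro x hx
    rw [interior_Ici] at hx
    rw [(hd x).deriv]; exact h x hx
  refine le_of_tendsto hl ?_
  filter_upwards [eventually_ge_atTop x0] with x hx
  exact ha Set.self_mem_Ici hx hx

theorem tendsto_mul_bdd {e b : ℝ → ℝ} (he : Tendsto e atTop (𝓝 0)) {C : ℝ}
    (hb : ∀ x, |b x| ≤ C) : Tendsto (fun x => e x * b x) atTop (𝓝 0) := by
  have h0 : Tendsto (fun x => |e x| * C) atTop (𝓝 0) := by
    have := (he.abs).mul_const C
    simpa using this
  refine squeeze_zero_norm (fun x => ?_) h0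
  rw [Real.norm_eq_abs, abs_mul]
  exact mul_le_mul_of_nonneg_left (hb x) (abs_nonneg _)

/-- decaying solutions of `-e'' - 4 e - 3 S² e = ρ` -/
structure Sol (e e1 rho : ℝ → ℝ) : Prop where
  d1 : ∀ x, HasDerivAt e (e1 x) x
  d2 : ∀ x, HasDerivAt e1 (-((4 + 3 * SS x ^ 2) * e x) - rho x) x
  l0 : Tendsto e atTop (𝓝 0)
  l1 : Tendsto e1 atTop (𝓝 0)

theorem Sol.wron {e e1 rho κ κ' : ℝ → ℝ} (h : Sol e e1 rho) (k1 : ∀ x, HasDerivAt κ (κ' x) x)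
    (k2 : ∀ x, HasDerivAt κ' (-((4 + 3 * SS x ^ 2) * κ x)) x) (x : ℝ) :
    HasDerivAt (fun x => e x * κ' x - e1 x * κ x) (rho x * κ x) x := by
  refine HasDerivAt.congr_deriv (((h.d1 x).mul (k2 x)).sub ((h.d2 x).mul (k1 x))) ?_
  ring

theorem Sol.wlim {e e1 rho κ κ' : ℝ → ℝ} (h : Sol e e1 rho) {C C' : ℝ} (k1 : ∀ x, |κ x| ≤ C)
    (k2 : ∀ x, |κ' x| ≤ C') : Tendsto (fun x => e x * κ' x - e1 x * κ x) atTop (𝓝 0) := by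
  have := (tendsto_mul_bdd h.l0 k2).sub (tendsto_mul_bdd h.l1 k1)
  simpa using this

theorem Sol.neg {e e1 rho : ℝ → ℝ} (h : Sol e e1 rho) :
    Sol (fun x => -e x) (fun x => -e1 x) (fun x => -rho x) where
  d1 x := (h.d1 x).neg
  d2 x := HasDerivAt.congr_deriv (h.d2 x).neg (by ring)
  l0 := by simpa using h.l0.neg
  l1 := by simpa using h.l1.neg

theorem sqrtS_d (c x : ℝ) :
    HasDerivAt (fun x => c * Real.sqrt 2 * SS x) (-(c * (HH x * SS x))) x := by
  refine HasDerivAt.congr_deriv ((SS_hasDerivAt x).const_mul (c * Real.sqrt 2)) ?_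
  rw [s2inv]; linear_combination (-(c * (HH x * SS x)) / 2) * s2sq

theorem Sol.bound1 {e e1 rho : ℝ → ℝ} (h : Sol e e1 rho) {ε : ℝ}
    (hr : ∀ x, 0 < x → |rho x| ≤ ε * (HH x * SS x)) {x : ℝ} (hx : 0 < x) :
    -(ε / 2 * Real.sqrt 2 * SS x) ≤ e x := by
  set κ : ℝ → ℝ := fun y => K2 x / 6 * K1 y - K1 x / 6 * K2 y with hκ
  set κ' : ℝ → ℝ := fun y => K2 x / 6 * K1' y - K1 x / 6 * K2' y with hκ'
  have d1 : ∀ y, HasDerivAt κ (κ' y) y := fun y =>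
    ((K1_d y).const_mul _).sub ((K2_d y).const_mul _)
  have d2 : ∀ y, HasDerivAt κ' (-((4 + 3 * SS y ^ 2) * κ y)) y := fun y =>
    HasDerivAt.congr_deriv (((K1'_d y).const_mul _).sub ((K2'_d y).const_mul _))
      (by simp only [hκ]; ring)
  have nx := K_norm x
  have b1 : ∀ y, |κ y| ≤ 1 / 2 := by
    intro y
    have ny := K_norm y
    apply abs_le_of_sq_le_sq _ (by norm_num)
    have e2 : κ y ^ 2 = ((K1 x ^ 2 + K2 x ^ 2) * (K1 y ^ 2 + K2 y ^ 2)
      - (K1 x * K1 y + K2 x * K2 y) ^ 2) / 36 := by simp only [hκ]; ring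
    rw [e2]
    nlinarith [sq_nonneg (K1 x * K1 y + K2 x * K2 y), sq_nonneg (K1 x), sq_nonneg (K2 x),
      sq_nonneg (K1 y), sq_nonneg (K2 y)]
  have b2 : ∀ y, |κ' y| ≤ 2 := by
    intro y
    have ny := K'_norm y
    apply abs_le_of_sq_le_sq _ (by norm_num)
    have e2 : κ' y ^ 2 = ((K1 x ^ 2 + K2 x ^ 2) * (K1' y ^ 2 + K2' y ^ 2)
      - (K1 x * K1' y + K2 x * K2' y) ^ 2) / 36 := by simp only [hκ']; ring
    rw [e2]
    nlinarith [sq_nonneg (K1 x * K1' y + K2 x * K2' y), sq_nonneg (K1 x), sq_nonneg (K2 x),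
      sq_nonneg (K1' y), sq_nonneg (K2' y)]
  have W := h.wron d1 d2
  have L := (h.wlim b1 b2).add (SS_tendsto.const_mul (ε / 2 * Real.sqrt 2))
  have D := fun y => (W y).add (sqrtS_d (ε / 2) y)
  have := lim_le (x0 := x) D (fun y hy => by
    have hy0 := hx.trans hy
    have r := hr y hy0
    have b := b1 y
    have : |rho y * κ y| ≤ ε * (HH y * SS y) * (1 / 2) := by
      rw [abs_mul]
      exact mul_le_mul r b (abs_nonneg _) ((abs_nonneg _).trans r)
    have := (abs_le.1 this).2
    linarith) L
  simp only [mul_zero, add_zero, Pi.add_apply] at this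
  have z1 : κ x = 0 := by simp only [hκ]; ring
  have z2 : κ' x = 1 := by
    have := K_wron x
    simp only [hκ']; linarith
  rw [z1, z2] at this
  linarith

theorem Sol.bound {e e1 rho : ℝ → ℝ} (h : Sol e e1 rho) {ε : ℝ}
    (hr : ∀ x, 0 < x → |rho x| ≤ ε * (HH x * SS x)) {x : ℝ} (hx : 0 < x) :
    |e x| ≤ ε / 2 * Real.sqrt 2 * SS x := by
  have a1 := h.bound1 hr hx
  have a2 := h.neg.bound1 (ε := ε) (fun y hy => by rw [abs_neg]; exact hr y hy) hx
  rw [abs_le]; constructor <;> linarith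

end CC
open MeasureTheory Filter Topology

theorem tanh_le_self {y : ℝ} (hy : 0 ≤ y) : Real.tanh y ≤ y := by
  have hd : ∀ x, HasDerivAt (fun x => x - Real.tanh x) (Real.tanh x ^ 2) x := fun x =>
    HasDerivAt.congr_deriv ((hasDerivAt_id x).sub (tanh_hasDerivAt x)) (by ring)
  have hm : Monotone (fun x => x - Real.tanh x) :=
    monotone_of_deriv_nonneg (fun x => (hd x).differentiableAt)
      (fun x => by rw [(hd x).deriv]; positivity)
  have := hm hy
  simp only [Real.tanh_zero] at this
  linarith

namespace CC

theorem K1_lower {x : ℝ} (hx : 0 < x) :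
    Real.sqrt 2 * (3 * HH x ^ 2 * SS x ^ 12 + HH x ^ 2 * SS x ^ 14 - 8 / 3 * HH x ^ 4 * SS x ^ 9
      - 4 / 3 * HH x ^ 4 * SS x ^ 11 - 4 * HH x ^ 4 * SS x ^ 10) ≤ HH x * SS x ^ 12 * K1 x := by
  have h2 := s2pos
  set y := x / Real.sqrt 2 with hy
  have hy0 : 0 < y := by positivity
  have hxy : x = Real.sqrt 2 * y := by rw [hy]; field_simp
  have y1 : HH x ≤ y := tanh_le_self hy0.le
  have y2 : y * SS x ≤ HH x := by
    have h3 := Real.self_le_sinh_iff.2 hy0.le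
    have h4 := Real.cosh_pos y
    rw [SS, HH, sech, Real.tanh_eq_sinh_div_cosh, ← hy, mul_one_div]
    gcongr
  have hH := HH_pos hx
  have hS := SS_pos x
  have a1 := Real.sin_ge_sub_cube (x := 2 * x) (by positivity)
  have a2 := Real.one_sub_sq_div_two_le_cos (x := 2 * x)
  have b1 : Real.sqrt 2 * (2 * y - 8 / 3 * y ^ 3) ≤ Real.sin (2 * x) := by
    refine le_trans (le_of_eq ?_) a1
    rw [hxy]
    linear_combination (4 / 3 * Real.sqrt 2 * y ^ 3) * s2sq
  have b2 : 1 - 4 * y ^ 2 ≤ Real.cos (2 * x) := by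
    refine le_trans (le_of_eq ?_) a2
    rw [hxy]
    linear_combination (2 * y ^ 2) * s2sq
  have c3 : y ^ 3 * SS x ^ 3 ≤ HH x ^ 3 := by
    rw [← mul_pow]; exact pow_le_pow_left₀ (by positivity) y2 3
  have c2 : y ^ 2 * SS x ^ 2 ≤ HH x ^ 2 := by
    rw [← mul_pow]; exact pow_le_pow_left₀ (by positivity) y2 2
  rw [K1, KA, KB]
  set H := HH x
  set S := SS x
  have e1 : Real.sqrt 2 * (2 * H * S ^ 3 - 8 / 3 * H ^ 3) ≤ Real.sin (2 * x) * S ^ 3 := by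
    have := mul_le_mul_of_nonneg_right b1 (by positivity : 0 ≤ S ^ 3)
    refine le_trans ?_ this
    rw [mul_assoc (Real.sqrt 2)]
    apply mul_le_mul_of_nonneg_left _ h2.le
    have := mul_le_mul_of_nonneg_right y1 (by positivity : 0 ≤ S ^ 3)
    linarith
  have e2 : S ^ 2 - 4 * H ^ 2 ≤ Real.cos (2 * x) * S ^ 2 := by
    have := mul_le_mul_of_nonneg_right b2 (by positivity : 0 ≤ S ^ 2)
    linarith
  have f1 := mul_le_mul_of_nonneg_right e1 (by positivity : 0 ≤ H * S ^ 9 * (1 + S ^ 2 / 2))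
  have f2 := mul_le_mul_of_nonneg_right e2 (by positivity : 0 ≤ H ^ 2 * S ^ 10 * Real.sqrt 2)
  linear_combination f1 + f2

theorem G5_bound {x : ℝ} (hx : 0 < x) :
    2 / 100000 * (m8 * EE (MP.d8 G5P) x) ≤ HH x * SS x ^ 12 * K1 x := by
  have h := EE_pos_cert cert_c5 hx
  simp only [c5P, EE_norm, EE_append, EE_scal, EE_cons, EE_nil] at h
  push_cast at h
  refine le_trans ?_ (K1_lower hx)
  rw [m8, s2inv]
  have := mul_nonneg s2pos.le h
  nlinarith

theorem polySol {p : MP} (h0 : MP.ev 1 1 0 p = 0) (h1 : MP.ev 1 1 0 (MP.d8raw p) = 0) (c : ℝ) :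
    Sol (fun x => c * EE p x) (fun x => c * (m8 * EE (MP.d8 p) x))
      (fun x => c / 128 * EE (L128 p) x) where
  d1 x := (EE_d8 p x).const_mul c
  d2 x := HasDerivAt.congr_deriv (((EE_d8 (MP.d8 p) x).const_mul m8).const_mul c) (by
    rw [EE_L128, ← mul_assoc m8, m8_sq]; ring)
  l0 := by
    have := (EE_tendsto p).const_mul c
    rw [h0, mul_zero] at this; exact this
  l1 := by
    have := ((d8_lim p).const_mul m8).const_mul c
    rw [h1, mul_zero, mul_zero] at this; exact this

theorem Sol.sub {e e1 r f f1 s : ℝ → ℝ} (h : Sol e e1 r) (k : Sol f f1 s) :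
    Sol (fun x => e x - f x) (fun x => e1 x - f1 x) (fun x => r x - s x) where
  d1 x := (h.d1 x).sub (k.d1 x)
  d2 x := HasDerivAt.congr_deriv ((h.d2 x).sub (k.d2 x)) (by ring)
  l0 := by simpa using h.l0.sub k.l0
  l1 := by simpa using h.l1.sub k.l1

noncomputable def rho0 (a x : ℝ) : ℝ := tt x * dF x + (a + 1 / 2) * ((1 - tt x ^ 2) * FF x)

theorem r0_bound {x : ℝ} (hx : 0 < x) :
    |rho0 0.68725 x - 0.00001 / 128 * EE (L128 gtP) x| ≤ 0.00005 * (HH x * SS x) := by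
  have p0 := EE_pos_cert cert_Rp0 hx
  have p1 := EE_pos_cert cert_Rp1 hx
  have m0 := EE_pos_cert cert_Rm0 hx
  have m1 := EE_pos_cert cert_Rm1 hx
  simp only [RP, oT, EE_norm, EE_append, EE_scal, EE_mul, EE_cons, EE_nil, EE_d8_FP, EE_FP]
    at p0 p1 m0 m1
  push_cast at p0 p1 m0 m1
  simp only [rho0, dF, FF]
  set t := tt x
  set H := HH x
  set S := SS x
  set L := EE (L128 gtP) x
  set A := 12800000 * (t * (10000000 * (24 * H ^ 2 * S ^ 4 - 16 * H ^ 4 * S ^ 2)))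
    + 15196800 * ((1 - t ^ 2) * (10000000 * (H ^ 3 * S ^ 2))) - 10000000 * L with hA
  set B := -(12800000 * (t * (8 * S ^ 3 - 8 * H ^ 2 * S))) - 15196800 * ((1 - t ^ 2) * (H * S)) with hB
  have q := conv_pp (A := A + 6400000000 * (H * S)) (B := B) (by rw [hA, hB]; linarith)
    (by rw [hA, hB]; linarith)
  have r := conv_pp (A := -A + 6400000000 * (H * S)) (B := -B) (by rw [hA, hB]; linarith)
    (by rw [hA, hB]; linarith)
  rw [hA, hB] at q r
  rw [abs_le]
  constructor <;> nlinarith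

theorem r2_bound {x : ℝ} (hx : 0 < x) :
    |(1 - tt x ^ 2) * FF x - 0.0001 / 128 * EE (L128 phP) x + 0.7579 * (HH x * SS x ^ 12)|
      ≤ 0.002 * (HH x * SS x) := by
  have p0 := EE_pos_cert cert_R2p0 hx
  have p1 := EE_pos_cert cert_R2p1 hx
  have m0 := EE_pos_cert cert_R2m0 hx
  have m1 := EE_pos_cert cert_R2m1 hx
  simp only [R2P, oT, EE_norm, EE_append, EE_scal, EE_mul, EE_cons, EE_nil, EE_FP]
    at p0 p1 m0 m1
  push_cast at p0 p1 m0 m1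
  simp only [FF]
  set t := tt x
  set H := HH x
  set S := SS x
  set L := EE (L128 phP) x
  set A := 1280000 * ((1 - t ^ 2) * (10000000 * (H ^ 3 * S ^ 2))) - 10000000 * L
    + 9701120000000 * (H * S ^ 12) with hA
  set B := - (1280000 * ((1 - t ^ 2) * (H * S))) with hB
  have q := conv_pp (A := A + 25600000000 * (H * S)) (B := B) (by rw [hA, hB]; linarith)
    (by rw [hA, hB]; linarith)
  have r := conv_pp (A := -A + 25600000000 * (H * S)) (B := -B) (by rw [hA, hB]; linarith)
    (by rw [hA, hB]; linarith)
  rw [hA, hB] at q r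
  rw [abs_le]
  constructor <;> nlinarith

theorem G5_lim : Tendsto (EE G5P) atTop (𝓝 3554) := by
  have h := EE_tendsto G5P
  norm_num [G5P, MP.ev] at h
  exact h
theorem G5_zero : EE G5P 0 = 0 := by
  rw [EE_zero]; norm_num [G5P, MP.ev]

theorem d_bound1 {e e1 rho : ℝ → ℝ} (h : Sol e e1 rho) (he0 : e 0 = 0) {d : ℝ} (hd : 0 ≤ d)
    (hr : ∀ x, 0 < x → |rho x + d * 0.7579 * (HH x * SS x ^ 12)|
      ≤ (0.00005 + 0.002 * d) * (HH x * SS x)) : d ≤ 0.0026 := by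
  have n1 : ∀ y, |K1 y| ≤ 1.74 := fun y => by
    apply abs_le_of_sq_le_sq _ (by norm_num)
    nlinarith [K_norm y, sq_nonneg (K2 y)]
  have n2 : ∀ y, |K1' y| ≤ 6 := fun y => by
    apply abs_le_of_sq_le_sq _ (by norm_num)
    nlinarith [K'_norm y, sq_nonneg (K2' y)]
  set b := 1.74 * (0.00005 + 0.002 * d) with hb
  have D := fun y => ((h.wron K1_d K1'_d y).add (sqrtS_d b y)).add
    ((EE_d8 G5P y).const_mul (2 / 100000 * 0.7579 * d))
  have L := ((h.wlim n1 n2).add (SS_tendsto.const_mul (b * Real.sqrt 2))).add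
    (G5_lim.const_mul (2 / 100000 * 0.7579 * d))
  have := lim_le (x0 := 0) D (fun y hy => by
    have r := hr y hy
    have g := mul_le_mul_of_nonneg_left (G5_bound hy) (by positivity : 0 ≤ 0.7579 * d)
    have : |(rho y + d * 0.7579 * (HH y * SS y ^ 12)) * K1 y| ≤
        (0.00005 + 0.002 * d) * (HH y * SS y) * 1.74 := by
      rw [abs_mul]
      exact mul_le_mul r (n1 y) (abs_nonneg _) ((abs_nonneg _).trans r)
    have := (abs_le.1 this).2
    rw [hb]
    linarith) L
  have z1 : K1 0 = 0 := by simp [K1, KB, HH]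
  have z2 : SS 0 = 1 := by simp [SS, sech]
  simp only [mul_zero, add_zero, Pi.add_apply, he0, z1, z2, G5_zero] at this
  have hs : Real.sqrt 2 ≤ 1.4143 := by
    rw [Real.sqrt_le_left (by norm_num)]; norm_num
  have hb0 : 0 ≤ b := by rw [hb]; positivity
  have := mul_le_mul_of_nonneg_left hs hb0
  rw [hb] at this
  rw [hb] at *
  norm_num at *
  linarith

theorem d_bound {γ γ1 : ℝ → ℝ} {a : ℝ} (h : Sol γ γ1 (rho0 a)) (h0 : γ 0 = 0) :
    |a - 0.68725| ≤ 0.0026 := by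
  set d := a - 0.68725 with hd
  have S1 := (h.sub (polySol (p := gtP) (by norm_num [gtP, MP.ev])
    (by norm_num [gtP, MP.ev, MP.d8raw]) 0.00001)).sub (polySol (p := phP)
    (by norm_num [phP, MP.ev]) (by norm_num [phP, MP.ev, MP.d8raw]) (d * 0.0001))
  have z0 : γ 0 - 0.00001 * EE gtP 0 - d * 0.0001 * EE phP 0 = 0 := by
    rw [EE_zero, EE_zero, h0]; norm_num [gtP, phP, MP.ev]
  have ha : a = 0.68725 + d := by rw [hd]; ring
  have key : ∀ x, 0 < x → |rho0 a x - 0.00001 / 128 * EE (L128 gtP) x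
      - d * 0.0001 / 128 * EE (L128 phP) x + d * 0.7579 * (HH x * SS x ^ 12)|
      ≤ (0.00005 + 0.002 * |d|) * (HH x * SS x) := by
    intro x hx
    have b1 := r0_bound hx
    have b2 := mul_le_mul_of_nonneg_left (r2_bound hx) (abs_nonneg d)
    rw [← abs_mul] at b2
    have e : rho0 a x - 0.00001 / 128 * EE (L128 gtP) x
      - d * 0.0001 / 128 * EE (L128 phP) x + d * 0.7579 * (HH x * SS x ^ 12)
      = (rho0 0.68725 x - 0.00001 / 128 * EE (L128 gtP) x) +
        d * ((1 - tt x ^ 2) * FF x - 0.0001 / 128 * EE (L128 phP) x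
          + 0.7579 * (HH x * SS x ^ 12)) := by
      rw [ha]; simp only [rho0]; ring
    rw [e]
    refine (abs_add_le _ _).trans ?_
    linarith
  rcases le_total 0 d with hd0 | hd0
  · rw [abs_of_nonneg hd0] at key ⊢
    exact d_bound1 S1 z0 hd0 key
  · rw [abs_of_nonpos hd0] at key ⊢
    refine d_bound1 S1.neg (by simp only [z0, neg_zero]) (by linarith) (fun x hx => ?_)
    have := key x hx
    rw [← abs_neg] at this
    refine le_trans (le_of_eq ?_) this
    congr 1; ring

theorem FF_abs {x : ℝ} (hx : 0 < x) : |FF x| ≤ 0.2946 * (HH x * SS x) := by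
  have hH := HH_pos hx
  have hS := SS_pos x
  have hS1 := SS_le_one x
  have e : FF x = (HH x * SS x) * (HH x ^ 2 * SS x - pp) := by rw [FF]; ring
  have h1 := pp_lo
  have h2 := pp_hi
  rw [e, abs_mul, abs_of_pos (by positivity : 0 < HH x * SS x), mul_comm]
  apply mul_le_mul_of_nonneg_right _ (by positivity)
  rw [HS_sq, abs_le]
  set S := SS x
  constructor
  · have : 0 ≤ (1 - S ^ 2) * S := by nlinarith [mul_nonneg hS.le (sub_nonneg.2 hS1)]
    linarith
  · nlinarith [mul_nonneg hS.le (sq_nonneg (S - 0.57735)), sq_nonneg (S - 0.57735)]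

theorem gamma_bound {γ γ1 : ℝ → ℝ} {a : ℝ} (h : Sol γ γ1 (rho0 a)) (h0 : γ 0 = 0)
    {x : ℝ} (hx : 0 < x) : |γ x - 0.00001 * EE gtP x| ≤ 0.000578 * SS x := by
  have hd := d_bound h h0
  set d := a - 0.68725 with hdd
  have ha : a = 0.68725 + d := by rw [hdd]; ring
  have S1 := (h.sub (polySol (p := gtP) (by norm_num [gtP, MP.ev])
    (by norm_num [gtP, MP.ev, MP.d8raw]) 0.00001))
  have := S1.bound (ε := 0.000816) (fun y hy => by
    have b1 := r0_bound hy
    have e : rho0 a y - 0.00001 / 128 * EE (L128 gtP) y =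
      (rho0 0.68725 y - 0.00001 / 128 * EE (L128 gtP) y) + d * ((1 - tt y ^ 2) * FF y) := by
      rw [ha]; simp only [rho0]; ring
    rw [e]
    refine (abs_add_le _ _).trans ?_
    have hHS : 0 < HH y * SS y := mul_pos (HH_pos hy) (SS_pos y)
    have b2 : |(1 - tt y ^ 2) * FF y| ≤ 0.2946 * (HH y * SS y) := by
      rw [abs_mul, abs_of_pos (by linarith [tt_lt y] : 0 < 1 - tt y ^ 2)]
      have := FF_abs hy
      nlinarith [abs_nonneg (FF y), sq_nonneg (tt y)]
    have b3 : |d * ((1 - tt y ^ 2) * FF y)| ≤ 0.0026 * (0.2946 * (HH y * SS y)) := by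
      rw [abs_mul]
      exact mul_le_mul hd b2 (abs_nonneg _) (by norm_num)
    linarith) hx
  refine this.trans ?_
  have hs : Real.sqrt 2 ≤ 1.4143 := by
    rw [Real.sqrt_le_left (by norm_num)]; norm_num
  nlinarith [SS_pos x]

end CC
open MeasureTheory Filter Topology

namespace CC

theorem FFg_lower {γ γ1 : ℝ → ℝ} {a : ℝ} (h : Sol γ γ1 (rho0 a)) (h0 : γ 0 = 0)
    {x : ℝ} (hx : 0 < x) :
    0.000001 * Real.sqrt 2 * (m8 * EE (MP.d8 G3P) x) ≤ FF x * γ x := by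
  have p0 := EE_pos_cert cert_g30 hx
  have p1 := EE_pos_cert cert_g31 hx
  simp only [g3P, EE_norm, EE_append, EE_scal, EE_mul, EE_cons, EE_nil, EE_FP] at p0 p1
  push_cast at p0 p1
  have b1 := gamma_bound h h0 hx
  have b2 := FF_abs hx
  have hm : Real.sqrt 2 * m8 = 1 / 8 := by
    have := s2pos
    rw [m8]; field_simp
  have e1 : 0.000001 * Real.sqrt 2 * (m8 * EE (MP.d8 G3P) x) =
      0.000001 / 8 * EE (MP.d8 G3P) x := by
    linear_combination (0.000001 * EE (MP.d8 G3P) x) * hm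
  rw [e1]
  have hH1 := HH_lt_one x
  have hH := HH_pos hx
  have hS := SS_pos x
  have b3 : |FF x * (γ x - 0.00001 * EE gtP x)| ≤ 0.000175 * SS x ^ 2 := by
    rw [abs_mul]
    refine (mul_le_mul b2 b1 (abs_nonneg _) (by positivity)).trans ?_
    nlinarith [mul_nonneg (sub_nonneg.2 hH1.le) (sq_nonneg (SS x)), sq_nonneg (SS x)]
  have b4 := (abs_le.1 b3).1
  simp only [FF] at *
  set H := HH x
  set S := SS x
  set G := EE (MP.d8 G3P) x
  set g := EE gtP x
  have q := conv_pp (A := 8 * (10000000 * (H ^ 3 * S ^ 2) * g) - 1400000000 * S ^ 2 - 1000000 * G)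
    (B := -(8 * (H * S * g))) (by linarith) (by linarith)
  linarith

theorem FF2_upper {x : ℝ} (hx : 0 < x) :
    (1 - tt x ^ 2) * (FF x ^ 2 / SS x) ≤ 0.000001 * Real.sqrt 2 * (m8 * EE (MP.d8 G4P) x) := by
  have p0 := EE_pos_cert cert_g40 hx
  have p1 := EE_pos_cert cert_g41 hx
  simp only [g4P, oT, EE_norm, EE_append, EE_scal, EE_mul, EE_cons, EE_nil] at p0 p1
  push_cast at p0 p1
  have hm : Real.sqrt 2 * m8 = 1 / 8 := by
    have := s2pos
    rw [m8]; field_simp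
  have e1 : 0.000001 * Real.sqrt 2 * (m8 * EE (MP.d8 G4P) x) =
      0.000001 / 8 * EE (MP.d8 G4P) x := by
    linear_combination (0.000001 * EE (MP.d8 G4P) x) * hm
  have hS := SS_pos x
  have e2 : FF x ^ 2 / SS x = HH x ^ 2 * SS x * (HH x ^ 2 * SS x - pp) ^ 2 := by
    rw [FF]; field_simp
  rw [e1, e2]
  have hT := tt_lt x
  set H := HH x
  set S := SS x
  set T := tt x ^ 2
  set G := EE (MP.d8 G4P) x
  set u := 10000000 * (H ^ 2 * S) with hu
  set k := (1 - T) * (H ^ 2 * S) with hk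
  have hk0 : 0 ≤ k := by rw [hk]; have : 0 ≤ 1 - T := by linarith
                         positivity
  have q := conv_pp (A := 100000000 * G - 8 * k * (u ^ 2 - 2945243 * 2945244))
    (B := 8 * k * (2 * u - (2945243 + 2945244)))
    (by rw [hk, hu]; linarith) (by rw [hk, hu]; linarith)
  have h1 := pp_lo
  have h2 := pp_hi
  have q2 : 0 ≤ 8 * k * ((10000000 * pp - 2945243) * (2945244 - 10000000 * pp)) := by
    have := mul_nonneg (sub_nonneg.2 h1) (sub_nonneg.2 h2)
    positivity
  have e3 : (1 - T) * (H ^ 2 * S * (H ^ 2 * S - pp) ^ 2) =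
      k * (u - 10000000 * pp) ^ 2 / 100000000000000 := by rw [hk, hu]; ring
  rw [e3]
  nlinarith

theorem int_ge {f : ℝ → ℝ} (hf : Integrable f) {p : MP} (hz : EE p 0 = 0) {c l : ℝ}
    (hl : Tendsto (EE p) atTop (𝓝 l))
    (h : ∀ x, 0 < x → c * (m8 * EE (MP.d8 p) x) ≤ f x) :
    c * l ≤ ∫ x in Set.Ioi (0:ℝ), f x := by
  refine le_of_tendsto_of_tendsto (hl.const_mul c)
    (intervalIntegral_tendsto_integral_Ioi 0 hf.integrableOn tendsto_id) ?_
  filter_upwards [eventually_ge_atTop 0] with R hR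
  have := intervalIntegral.sub_le_integral_of_hasDeriv_right_of_le (g := fun x => c * EE p x)
    (g' := fun x => c * (m8 * EE (MP.d8 p) x)) hR
    ((EE_continuous p).const_mul c).continuousOn
    (fun x _ => ((EE_d8 p x).const_mul c).hasDerivWithinAt) hf.integrableOn
    (fun x hx => h x hx.1)
  rw [hz, mul_zero, sub_zero] at this
  exact this

theorem int_le {f : ℝ → ℝ} (hf : Integrable f) {p : MP} (hz : EE p 0 = 0) {c l : ℝ}
    (hl : Tendsto (EE p) atTop (𝓝 l))
    (h : ∀ x, 0 < x → f x ≤ c * (m8 * EE (MP.d8 p) x)) :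
    ∫ x in Set.Ioi (0:ℝ), f x ≤ c * l := by
  have := int_ge hf.neg hz (c := -c) hl (fun x hx => by
    have := h x hx
    simp only [Pi.neg_apply]; linarith)
  simp only [Pi.neg_apply, integral_neg] at this
  linarith

theorem FF_continuous : Continuous FF :=
  continuous_iff_continuousAt.2 fun x => (FF_hasDerivAt x).continuousAt
theorem FF_odd (x : ℝ) : FF (-x) = -FF x := by
  simp only [FF, HH_odd, SS_even]; ring

theorem FF_abs' (x : ℝ) : |FF x| ≤ 0.2946 * SS x := by
  have key : ∀ y, 0 < y → |FF y| ≤ 0.2946 * SS y := fun y hy => by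
    refine (FF_abs hy).trans ?_
    have := HH_lt_one y
    have := SS_pos y
    nlinarith
  rcases lt_trichotomy x 0 with h | h | h
  · have := key (-x) (by linarith)
    rwa [FF_odd, SS_even, abs_neg] at this
  · have h1 := SS_pos x
    have : HH x = 0 := by rw [h]; simp [HH]
    rw [FF, this]; norm_num; exact h1.le
  · exact key x h

theorem FF2S_le (x : ℝ) : FF x ^ 2 / SS x ≤ SS x := by
  have hS := SS_pos x
  have h := FF_abs' x
  rw [div_le_iff₀ hS]
  have : FF x ^ 2 = |FF x| ^ 2 := (sq_abs _).symm
  rw [this]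
  nlinarith [abs_nonneg (FF x)]

theorem int_FF2S : Integrable (fun x => (1 - tt x ^ 2) * (FF x ^ 2 / SS x)) := by
  refine SS_integrable.mono' ?_ (ae_of_all _ fun x => ?_)
  · refine Continuous.aestronglyMeasurable ?_
    have := tt_continuous; have := FF_continuous; have := SS_continuous
    exact (continuous_const.sub (tt_continuous.pow 2)).mul
      ((FF_continuous.pow 2).div SS_continuous (fun x => (SS_pos x).ne'))
  · have hS := SS_pos x
    have h1 := FF2S_le x
    have h2 := tt_lt x
    have h3 : 0 ≤ FF x ^ 2 / SS x := by positivity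
    rw [Real.norm_eq_abs, abs_of_nonneg (mul_nonneg (by linarith) h3)]
    nlinarith [sq_nonneg (tt x)]

theorem int_F2_le : ∫ x, (1 - tt x ^ 2) * (FF x ^ 2 / SS x) ≤ 2 * Real.sqrt 2 * 0.010115 := by
  rw [integral_even_Ioi (f := fun x => (1 - tt x ^ 2) * (FF x ^ 2 / SS x))
    (fun x => by simp only [tt_odd, FF_odd, SS_even]; ring)]
  have hl : Tendsto (EE G4P) atTop (𝓝 10115) := by
    have h := EE_tendsto G4P
    norm_num [G4P, MP.ev] at h
    exact h
  have hz : EE G4P 0 = 0 := by rw [EE_zero]; norm_num [G4P, MP.ev]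
  have := int_le int_FF2S hz hl (fun x hx => FF2_upper hx)
  linarith

theorem int_Fg_ge {γ γ1 : ℝ → ℝ} {a : ℝ} (h : Sol γ γ1 (rho0 a)) (hodd : ∀ x, γ (-x) = -γ x)
    (hi : Integrable (fun x => FF x * γ x)) :
    2 * Real.sqrt 2 * 0.002085 ≤ ∫ x, FF x * γ x := by
  have h0 : γ 0 = 0 := by have := hodd 0; rw [neg_zero] at this; linarith
  rw [integral_even_Ioi (f := fun x => FF x * γ x)
    (fun x => by simp only [FF_odd, hodd]; ring)]
  have hl : Tendsto (EE G3P) atTop (𝓝 2085) := by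
    have h := EE_tendsto G3P
    norm_num [G3P, MP.ev] at h
    exact h
  have hz : EE G3P 0 = 0 := by rw [EE_zero]; norm_num [G3P, MP.ev]
  have := int_ge hi hz hl (fun x hx => FFg_lower h h0 hx)
  linarith

end CC
open MeasureTheory Filter Topology

namespace CC

theorem zeta_sq (x : ℝ) : zetaV x ^ 2 = 1 - tt x ^ 2 := by
  have h := cc_sq x
  have hc := (Real.cosh_pos (x / (8 * Real.sqrt 2))).ne'
  rw [zetaV, sech]; rw [cc] at h; field_simp; linarith

theorem zeta_continuous : Continuous zetaV := by
  unfold zetaV sech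
  exact continuous_const.div (Real.continuous_cosh.comp (continuous_id.div_const _))
    (fun x => (Real.cosh_pos _).ne')

theorem amgm (w z F S t : ℝ) (hS : 0 < S) :
    0 ≤ 10 / 17 * (S * w ^ 2) + t * (w * z * F) + t ^ 2 * (17 / 40) * (z ^ 2 * (F ^ 2 / S)) := by
  have e : 10 / 17 * (S * w ^ 2) + t * (w * z * F) + t ^ 2 * (17 / 40) * (z ^ 2 * (F ^ 2 / S))
      = 10 / 17 / S * (S * w + 17 / 20 * t * z * F) ^ 2 := by
    field_simp; ring
  rw [e]; positivity

theorem cross {w : ℝ → ℝ} (hw : Continuous w) (h1 : Integrable (fun x => (w x) ^ 2)) (t : ℝ) :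
    0 ≤ 10 / 17 * (∫ x, SS x * w x ^ 2) + t * (∫ x, w x * zetaV x * FF x)
      + t ^ 2 * (17 / 40) * ∫ x, (1 - tt x ^ 2) * (FF x ^ 2 / SS x) := by
  have iS : Integrable (fun x => SS x * w x ^ 2) := int_bdd h1 SS_continuous (C := 1) (by
    intro x; rw [abs_of_pos (SS_pos x)]; exact SS_le_one x)
  have iX : Integrable (fun x => w x * zetaV x * FF x) := by
    refine (iS.add int_FF2S).mono' ?_ (ae_of_all _ fun x => ?_)
    · exact ((hw.mul zeta_continuous).mul FF_continuous).aestronglyMeasurable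
    · have a1 := amgm (w x) (zetaV x) (FF x) (SS x) 1 (SS_pos x)
      have a2 := amgm (w x) (zetaV x) (FF x) (SS x) (-1) (SS_pos x)
      have hS := SS_pos x
      have b1 : 0 ≤ SS x * w x ^ 2 := by positivity
      have b2 : 0 ≤ zetaV x ^ 2 * (FF x ^ 2 / SS x) := by positivity
      rw [Real.norm_eq_abs, abs_le]
      simp only [Pi.add_apply]
      rw [← zeta_sq]
      constructor <;> linarith
  have j1 : Integrable (fun x => 10 / 17 * (SS x * w x ^ 2)) := iS.const_mul _
  have j2 : Integrable (fun x => t * (w x * zetaV x * FF x)) := iX.const_mul _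
  have j3 : Integrable (fun x => t ^ 2 * (17 / 40) * ((1 - tt x ^ 2) * (FF x ^ 2 / SS x))) :=
    int_FF2S.const_mul _
  have j4 : Integrable (fun x => 10 / 17 * (SS x * w x ^ 2) + t * (w x * zetaV x * FF x)) :=
    j1.add j2
  rw [← integral_const_mul, ← integral_const_mul, ← integral_const_mul, ← integral_add j1 j2,
    ← integral_add j4 j3]
  refine integral_nonneg fun x => ?_
  simp only [Pi.zero_apply]
  rw [← zeta_sq]
  exact amgm _ _ _ _ _ (SS_pos x)

theorem c9_pos : 0 < c9 := by have := s2pos; unfold c9; positivity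
theorem c9_sq : c9 ^ 2 = 81 / 32 := by
  rw [c9]; linear_combination (81 / 64) * s2sq

theorem deriv_fsrc (x : ℝ) : deriv fsrc x = c9 * (m8 * dF x) := by
  have e : fsrc = fun x => c9 * FF x := funext fsrc_eq
  rw [e]; exact ((FF_hasDerivAt x).const_mul c9).deriv

theorem psi_deriv (x : ℝ) : deriv psiV x = 1 - tt x ^ 2 := by
  have := (tt_hasDerivAt x).const_mul (8 * Real.sqrt 2)
  have e : psiV = fun x => 8 * Real.sqrt 2 * tt x := rfl
  rw [e, this.deriv]
  have := s2pos
  field_simp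

theorem gSol {a : ℝ} {g : ℝ → ℝ} (hgs : ∃ S : SchwartzMap ℝ ℝ, ∀ x : ℝ, S x = g x)
    (hgeq : ∀ x : ℝ, -(deriv (deriv g)) x - 4 * g x - 3 * sech (x / Real.sqrt 2) ^ 2 * g x
        = psiV x * deriv fsrc x + (a + 1 / 2) * deriv psiV x * fsrc x) :
    Sol (fun x => c9⁻¹ * g x) (fun x => c9⁻¹ * deriv g x) (rho0 a) := by
  obtain ⟨S, hS⟩ := hgs
  have e : g = S := funext fun x => (hS x).symm
  have e' : deriv g = SchwartzMap.derivCLM ℝ ℝ S := by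
    funext x; rw [SchwartzMap.derivCLM_apply, e]
  have hc := c9_pos.ne'
  refine ⟨fun x => ?_, fun x => ?_, ?_, ?_⟩
  · have : DifferentiableAt ℝ g x := by rw [e]; exact S.differentiableAt
    exact this.hasDerivAt.const_mul _
  · have : DifferentiableAt ℝ (deriv g) x := by rw [e']; exact SchwartzMap.differentiableAt _
    refine HasDerivAt.congr_deriv (this.hasDerivAt.const_mul _) ?_
    have h := hgeq x
    rw [deriv_fsrc, psi_deriv, fsrc_eq, show psiV x = 8 * Real.sqrt 2 * tt x from rfl,
      show sech (x / Real.sqrt 2) = SS x from rfl] at h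
    have hm : 8 * Real.sqrt 2 * m8 = 1 := by
      have := s2pos
      rw [m8]; field_simp
    have h' : deriv (deriv g) x = -((4 + 3 * SS x ^ 2) * g x) - c9 * rho0 a x := by
      rw [rho0]
      linear_combination -h - (c9 * tt x * dF x) * hm
    rw [h']; field_simp
  · have := ((S.tendsto_cocompact).mono_left atTop_le_cocompact).const_mul c9⁻¹
    rw [mul_zero] at this; rw [e]; exact this
  · have := (((SchwartzMap.derivCLM ℝ ℝ S).tendsto_cocompact).mono_left
      atTop_le_cocompact).const_mul c9⁻¹
    rw [mul_zero] at this; rw [e']; exact this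

end CC

theorem coercivity_Dsharp
    (hFGR : (∫ x : ℝ, deriv psiV x * fsrc x * (kJost x).im) ≠ 0)
    (a : ℝ)
    (ha : a = -(∫ x : ℝ, (psiV x * deriv fsrc x + (1 / 2) * deriv psiV x * fsrc x) * (kJost x).im)
          / (∫ x : ℝ, deriv psiV x * fsrc x * (kJost x).im))
    (g : ℝ → ℝ)
    (hgodd : ∀ x : ℝ, g (-x) = -g x)
    (hgschwartz : ∃ S : SchwartzMap ℝ ℝ, ∀ x : ℝ, S x = g x)
    (hgeq : ∀ x : ℝ, -(deriv (deriv g)) x - 4 * g x - 3 * sech (x / Real.sqrt 2) ^ 2 * g x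
        = psiV x * deriv fsrc x + (a + 1 / 2) * deriv psiV x * fsrc x) :
    ∃ κ > 0, ∀ (α : ℝ) (w : ℝ → ℝ),
      (∀ x : ℝ, w (-x) = -w x) →
      Differentiable ℝ w →
      Integrable (fun x => (w x) ^ 2) →
      Integrable (fun x => (deriv w x) ^ 2) →
      (∫ x : ℝ, w x * Z1 x) = 0 →
      (∫ x : ℝ, ((deriv w x) ^ 2 - Vpot x * (w x) ^ 2))
          + a * α * (∫ x : ℝ, w x * zetaV x * fsrc x)
          + α ^ 2 * (∫ x : ℝ, fsrc x * g x)
        ≥ κ * (α ^ 2 + ∫ x : ℝ, (deriv w x) ^ 2) := by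
  have hsol := CC.gSol hgschwartz hgeq
  have hγodd : ∀ x, CC.c9⁻¹ * g (-x) = -(CC.c9⁻¹ * g x) := fun x => by rw [hgodd]; ring
  have hγ0 : CC.c9⁻¹ * g 0 = 0 := by
    have := hgodd 0; rw [neg_zero] at this
    have : g 0 = 0 := by linarith
    rw [this, mul_zero]
  have hc := CC.c9_pos.ne'
  have hab := CC.d_bound hsol hγ0
  have hga : Integrable g := by
    obtain ⟨S, hS⟩ := hgschwartz
    have e : g = S := funext fun x => (hS x).symm
    rw [e]; exact S.integrable
  have hFi : Integrable (fun x => CC.FF x * (CC.c9⁻¹ * g x)) :=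
    CC.int_bdd (hga.const_mul _) CC.FF_continuous (C := 1) (fun x => by
      refine (CC.FF_abs' x).trans ?_
      linarith [SS_le_one x])
  have hΓ := CC.int_Fg_ge hsol hγodd hFi
  have hM := CC.int_F2_le
  refine ⟨0.0001, by norm_num, ?_⟩
  intro α w hodd hw h1 h2 h3
  have hB := CC.partB hodd hw h1 h2 h3
  have hX := CC.cross hw.continuous h1 (a * α * CC.c9)
  have e1 : ∫ x, w x * zetaV x * fsrc x = CC.c9 * ∫ x, w x * zetaV x * CC.FF x := by
    rw [← integral_const_mul]
    congr 1; funext x; rw [CC.fsrc_eq]; ring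
  have e2 : ∫ x, fsrc x * g x = CC.c9 ^ 2 * ∫ x, CC.FF x * (CC.c9⁻¹ * g x) := by
    rw [← integral_const_mul]
    congr 1; funext x; rw [CC.fsrc_eq]; field_simp
  have hP : 0 ≤ ∫ x, deriv w x ^ 2 := integral_nonneg fun x => sq_nonneg _
  rw [e1, e2]
  set B := ∫ x, (deriv w x ^ 2 - Vpot x * w x ^ 2)
  set N := ∫ x, SS x * w x ^ 2
  set X := ∫ x, w x * zetaV x * CC.FF x
  set M := ∫ x, (1 - tt x ^ 2) * (CC.FF x ^ 2 / SS x)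
  set P := ∫ x, deriv w x ^ 2
  set Γ := ∫ x, CC.FF x * (CC.c9⁻¹ * g x)
  have hs : 1.4 ≤ Real.sqrt 2 := by
    apply Real.le_sqrt_of_sq_le; norm_num
  have ha2 : a ^ 2 ≤ 0.476 := by
    rw [abs_le] at hab
    nlinarith
  have hc2 := CC.c9_sq
  have hM2 : a ^ 2 * M ≤ 0.476 * (2 * Real.sqrt 2 * 0.010115) := by
    have h4 := mul_le_mul_of_nonneg_left hM (sq_nonneg a)
    have h5 := mul_le_mul_of_nonneg_right ha2 (by positivity : 0 ≤ 2 * Real.sqrt 2 * 0.010115)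
    linarith
  have hfin : 0.0001 ≤ CC.c9 ^ 2 * (Γ - 17 / 40 * (a ^ 2 * M)) := by
    rw [hc2]; linarith
  have h6 := mul_le_mul_of_nonneg_left hfin (sq_nonneg α)
  have e3 : (a * α * CC.c9) ^ 2 * (17 / 40) * M
    = α ^ 2 * (CC.c9 ^ 2 * (17 / 40 * (a ^ 2 * M))) := by ring
  rw [e3] at hX
  rw [ge_iff_le]
  norm_num at hB ⊢
  norm_num at h6 
  linarith
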